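/- arXiv:2307.01562 — 2 statements merged into one kernel-verified Lean document; each statement's English description precedes it below -/
import Mathlib

section
/- Let T be a non-mixing measure-preserving automorphism of a standard Borel probability space (X, 𝓑, μ). Then there exists a T-invariant sub-σ-algebra 𝓐 ⊆ 𝓑 which is nontrivial mod μ (there exists A ∈ 𝓐 with 0 < μ(A) < 1) such that for every probability space (Y, 𝓒, ν) and every mixing measure-preserving automorphism S of (Y, ν), every probability measure ρ on the measurable space (X × Y, 𝓐 ⊗ 𝓒) that is invariant under T × S and has marginals μ restricted to 𝓐 and ν is equal to the product measure (μ|𝓐) ⊗ ν. -/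
open MeasureTheory Filter Topology

/-- A measure-preserving transformation `S` of `(Y, ν)` is mixing if
`ν (A ∩ S^{-n} B) → ν A * ν B` for all measurable sets `A`, `B`. -/
def MeasureMixing {Y : Type*} [MeasurableSpace Y] (S : Y → Y) (ν : Measure Y) : Prop :=
  ∀ A B : Set Y, MeasurableSet A → MeasurableSet B →
    Tendsto (fun n => ν (A ∩ S^[n] ⁻¹' B)) atTop (𝓝 (ν A * ν B))


namespace NMix

/-- bounded measurable -/
def BM {Z : Type*} [MeasurableSpace Z] (f : Z → ℝ) : Prop :=
  Measurable f ∧ ∃ C : ℝ, ∀ z, |f z| ≤ C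

/-- measurable, bounded by one -/
def B1 {Z : Type*} [MeasurableSpace Z] (f : Z → ℝ) : Prop :=
  Measurable f ∧ ∀ z, |f z| ≤ 1

section basics
variable {Z W : Type*} [MeasurableSpace Z] [MeasurableSpace W]

lemma B1.bm {f : Z → ℝ} (h : B1 f) : BM f := ⟨h.1, 1, h.2⟩

lemma BM.mul {f g : Z → ℝ} (hf : BM f) (hg : BM g) : BM (fun z => f z * g z) := by
  obtain ⟨hf, C, hC⟩ := hf
  obtain ⟨hg, D, hD⟩ := hg
  refine ⟨hf.mul hg, C * D, fun z => ?_⟩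
  rw [abs_mul]
  exact mul_le_mul (hC z) (hD z) (abs_nonneg _) ((abs_nonneg _).trans (hC z))

lemma BM.add {f g : Z → ℝ} (hf : BM f) (hg : BM g) : BM (fun z => f z + g z) := by
  obtain ⟨hf, C, hC⟩ := hf
  obtain ⟨hg, D, hD⟩ := hg
  exact ⟨hf.add hg, C + D, fun z => (abs_add_le _ _).trans (add_le_add (hC z) (hD z))⟩

lemma BM.const (c : ℝ) : BM (fun _ : Z => c) := ⟨measurable_const, |c|, fun _ => le_rfl⟩

lemma BM.sub {f g : Z → ℝ} (hf : BM f) (hg : BM g) : BM (fun z => f z - g z) := by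
  have := hf.add ((BM.const (-1)).mul hg)
  simpa [sub_eq_add_neg] using this

lemma BM.comp {f : Z → ℝ} (hf : BM f) {p : W → Z} (hp : Measurable p) : BM (fun w => f (p w)) :=
  ⟨hf.1.comp hp, hf.2.choose, fun _ => hf.2.choose_spec _⟩

lemma B1.comp {f : Z → ℝ} (hf : B1 f) {p : W → Z} (hp : Measurable p) : B1 (fun w => f (p w)) :=
  ⟨hf.1.comp hp, fun _ => hf.2 _⟩

lemma B1.mul {f g : Z → ℝ} (hf : B1 f) (hg : B1 g) : B1 (fun z => f z * g z) := by
  refine ⟨hf.1.mul hg.1, fun z => ?_⟩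
  rw [abs_mul]
  exact mul_le_one₀ (hf.2 z) (abs_nonneg _) (hg.2 z)

lemma BM.sum {ι : Type*} (s : Finset ι) {f : ι → Z → ℝ} (hf : ∀ i ∈ s, BM (f i)) :
    BM (fun z => ∑ i ∈ s, f i z) := by
  classical
  induction s using Finset.induction_on with
  | empty => simpa using BM.const (Z := Z) 0
  | insert a s ha ih =>
    simp only [Finset.sum_insert ha]
    exact (hf a (by simp)).add (ih fun i hi => hf i (by simp [hi]))

lemma BM.integrable {f : Z → ℝ} (hf : BM f) (ρ : Measure Z) [IsFiniteMeasure ρ] :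
    Integrable f ρ :=
  Integrable.of_bound hf.1.aestronglyMeasurable hf.2.choose
    (Eventually.of_forall fun z => by simpa using hf.2.choose_spec z)

lemma BM.memLp {f : Z → ℝ} (hf : BM f) (ρ : Measure Z) [IsFiniteMeasure ρ] (p : ENNReal) :
    MemLp f p ρ :=
  MemLp.of_bound hf.1.aestronglyMeasurable hf.2.choose
    (Eventually.of_forall fun z => by simpa using hf.2.choose_spec z)

lemma BM.indicator {s : Set Z} (hs : MeasurableSet s) : BM (s.indicator (fun _ => (1:ℝ))) := by
  refine ⟨measurable_const.indicator hs, 1, fun z => ?_⟩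
  by_cases h : z ∈ s <;> simp [h]

lemma B1.indicator {s : Set Z} (hs : MeasurableSet s) : B1 (s.indicator (fun _ => (1:ℝ))) := by
  refine ⟨measurable_const.indicator hs, fun z => ?_⟩
  by_cases h : z ∈ s <;> simp [h]

lemma BM.simple (g : SimpleFunc Z ℝ) : BM g :=
  ⟨g.measurable, by simpa using g.exists_forall_norm_le⟩

lemma B1.abs_integral_le {f : Z → ℝ} (hf : B1 f) (ρ : Measure Z) [IsProbabilityMeasure ρ] :
    |∫ z, f z ∂ρ| ≤ 1 := by
  have := norm_integral_le_of_norm_le_const (μ := ρ) (f := f) (C := 1)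
    (Eventually.of_forall fun z => by simpa using hf.2 z)
  simpa using this

end basics

/-- mixing for simple functions -/
lemma mixing_simple {Y : Type*} [MeasurableSpace Y] {S : Y → Y} {ν : Measure Y}
    [IsProbabilityMeasure ν] (hSm : Measurable S) (hS : MeasureMixing S ν) (g g' : SimpleFunc Y ℝ) :
    Tendsto (fun n => ∫ y, g y * g' (S^[n] y) ∂ν) atTop (𝓝 ((∫ y, g y ∂ν) * ∫ y, g' y ∂ν)) := by
  have hit : ∀ n, Measurable (S^[n]) := fun n => hSm.iterate n
  induction g using SimpleFunc.induction with
  | @const c A hA =>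
    induction g' using SimpleFunc.induction with
    | @const d B hB =>
      have h1 := (ENNReal.tendsto_toReal (ENNReal.mul_ne_top (measure_ne_top ν A)
        (measure_ne_top ν B))).comp (hS A B hA hB)
      have h2 := h1.const_mul (c * d)
      have e1 : ∀ (A : Set Y) (c : ℝ) (hA : MeasurableSet A), 
          ∫ y, (SimpleFunc.piecewise A hA (SimpleFunc.const Y c) (SimpleFunc.const Y 0)) y ∂ν
            = c * (ν A).toReal := by
        intro A c hA
        have : ∀ y, (SimpleFunc.piecewise A hA (SimpleFunc.const Y c) (SimpleFunc.const Y 0)) y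
            = A.indicator (fun _ => c) y := by
          intro y; by_cases h : y ∈ A <;> simp [h]
        simp only [this]
        rw [integral_indicator hA]
        simp [Measure.real, mul_comm]
      rw [e1, e1]
      have e2 : c * (ν A).toReal * (d * (ν B).toReal) = c * d * (ν A * ν B).toReal := by
        rw [ENNReal.toReal_mul]; ring
      rw [e2]
      refine h2.congr fun n => ?_
      have : ∀ y, (SimpleFunc.piecewise A hA (SimpleFunc.const Y c) (SimpleFunc.const Y 0)) y *
          (SimpleFunc.piecewise B hB (SimpleFunc.const Y d) (SimpleFunc.const Y 0)) (S^[n] y)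
            = (A ∩ S^[n] ⁻¹' B).indicator (fun _ => c * d) y := by
        intro y
        by_cases h : y ∈ A <;> by_cases h' : S^[n] y ∈ B <;> simp [h, h', Set.indicator]
      simp only [this]
      rw [integral_indicator (hA.inter (hit n hB))]
      simp [Measure.real, mul_comm]
    | @add f f' hd h1 h2 =>
      have := h1.add h2
      simp only [SimpleFunc.coe_add, Pi.add_apply, mul_add]
      rw [integral_add ((BM.simple f).integrable ν) ((BM.simple f').integrable ν), mul_add]
      refine this.congr fun n => ?_
      rw [integral_add (((BM.simple _).mul ((BM.simple f).comp (hit n))).integrable ν)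
        (((BM.simple _).mul ((BM.simple f').comp (hit n))).integrable ν)]
  | @add f f' hd h1 h2 =>
    have := h1.add h2
    simp only [SimpleFunc.coe_add, Pi.add_apply, add_mul]
    rw [integral_add ((BM.simple f).integrable ν) ((BM.simple f').integrable ν), add_mul]
    refine this.congr fun n => ?_
    rw [integral_add (((BM.simple f).mul ((BM.simple _).comp (hit n))).integrable ν)
      (((BM.simple f').mul ((BM.simple _).comp (hit n))).integrable ν)]

/-- `F` is the weak limit of `h ∘ T^n` along `U`. -/
structure WL {X : Type*} [MeasurableSpace X] (U : Ultrafilter ℕ) (T : X → X) (μ : Measure X)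
    (h F : X → ℝ) : Prop where
  b1 : B1 h
  b2 : B1 F
  lim : ∀ φ : X → ℝ, MemLp φ 2 μ →
    Tendsto (fun n => ∫ x, h (T^[n] x) * φ x ∂μ) U (𝓝 (∫ x, F x * φ x ∂μ))

lemma inner_toLp {Z : Type*} [MeasurableSpace Z] {ρ : Measure Z} {f g : Z → ℝ}
    (hf : MemLp f 2 ρ) (hg : MemLp g 2 ρ) :
    inner ℝ (hf.toLp f) (hg.toLp g) = ∫ z, f z * g z ∂ρ := by
  rw [L2.inner_def]
  refine integral_congr_ae ?_
  filter_upwards [hf.coeFn_toLp, hg.coeFn_toLp] with z h1 h2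
  rw [h1, h2]
  simp [mul_comm]

lemma exists_WL {X : Type*} [MeasurableSpace X] (U : Ultrafilter ℕ) {T : X → X} {μ : Measure X}
    [IsProbabilityMeasure μ] (hT : Measurable T) {h : X → ℝ} (hh : B1 h) :
    ∃ F, WL U T μ h F := by
  have hb : ∀ n, B1 (fun x => h (T^[n] x)) := fun n => hh.comp (hT.iterate n)
  have hm : ∀ n, MemLp (fun x => h (T^[n] x)) 2 μ := fun n => (hb n).bm.memLp μ 2
  let v : ℕ → Lp ℝ 2 μ := fun n => (hm n).toLp _
  have hv : ∀ n, ‖v n‖ ≤ 1 := by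
    intro n
    rw [Lp.norm_toLp]
    refine ENNReal.toReal_le_of_le_ofReal zero_le_one ?_
    refine (eLpNorm_le_of_ae_bound (C := 1) (Eventually.of_forall fun x => ?_)).trans ?_
    · simpa using (hb n).2 x
    · simp
  let d : ℕ → WeakDual ℝ (Lp ℝ 2 μ) :=
    fun n => StrongDual.toWeakDual (InnerProductSpace.toDual ℝ _ (v n))
  have hc := WeakDual.isCompact_closedBall (𝕜 := ℝ) (E := Lp ℝ 2 μ) 0 1
  obtain ⟨w, hw, hlim⟩ := hc.ultrafilter_le_nhds (U.map d) (by
    rw [le_principal_iff]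
    refine Ultrafilter.mem_map.2 (Filter.univ_mem' fun n => ?_)
    simp only [Set.mem_preimage, Metric.mem_closedBall, dist_zero_right]
    have : ‖InnerProductSpace.toDual ℝ (Lp ℝ 2 μ) (v n)‖ ≤ 1 := by
      rw [LinearIsometryEquiv.norm_map]; exact hv n
    exact this)
  have hlim' : Tendsto d U (𝓝 w) := hlim
  let f : Lp ℝ 2 μ := (InnerProductSpace.toDual ℝ _).symm (WeakDual.toStrongDual w)
  have hev : ∀ u : Lp ℝ 2 μ, Tendsto (fun n => inner ℝ (v n) u) U (𝓝 (inner ℝ f u)) := by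
    intro u
    have := ((WeakDual.eval_continuous u).tendsto w).comp hlim'
    have e : inner ℝ f u = w u := by
      simp only [f]
      rw [InnerProductSpace.toDual_symm_apply]; rfl
    rw [e]
    exact this
  have hfm : Measurable f := (Lp.stronglyMeasurable f).measurable
  have hfL : MemLp f 2 μ := Lp.memLp f
  have hl : ∀ φ : X → ℝ, MemLp φ 2 μ →
      Tendsto (fun n => ∫ x, h (T^[n] x) * φ x ∂μ) U (𝓝 (∫ x, f x * φ x ∂μ)) := by
    intro φ hφ
    have := hev (hφ.toLp φ)
    have e : f = hfL.toLp f := (Lp.toLp_coeFn f hfL).symm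
    rw [e, inner_toLp] at this
    simpa only [v, inner_toLp] using this
  -- bounds
  have hfi : Integrable f μ := hfL.integrable (by norm_num)
  have key : ∀ σ : ℝ, (σ = 1 ∨ σ = -1) → ∀ᵐ x ∂μ, σ * f x ≤ 1 := by
    intro σ hσ
    have hAm : MeasurableSet {x | 1 < σ * f x} :=
      measurableSet_lt measurable_const (hfm.const_mul σ)
    set A := {x | 1 < σ * f x} with hA
    have hφ : BM (A.indicator (fun _ => (1:ℝ))) := BM.indicator hAm
    have h1 := (hl _ (hφ.memLp μ 2)).const_mul σ
    have h2 : σ * ∫ x, f x * A.indicator (fun _ => (1:ℝ)) x ∂μ ≤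
        ∫ x, A.indicator (fun _ => (1:ℝ)) x ∂μ := by
      refine le_of_tendsto h1 (Eventually.of_forall fun n => ?_)
      rw [← integral_const_mul]
      refine integral_mono (((hb n).bm.mul hφ).integrable μ |>.const_mul σ) (hφ.integrable μ) ?_
      intro x
      by_cases hx : x ∈ A
      · have := (hb n).2 x
        rw [abs_le] at this
        rcases hσ with rfl | rfl
        · simp [hx]; linarith
        · simp [hx]; linarith
      · simp [hx]
    have hfAi : Integrable (fun x => f x * A.indicator (fun _ => (1:ℝ)) x) μ := by
      have : (fun x => f x * A.indicator (fun _ => (1:ℝ)) x) = A.indicator f := by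
        ext x; by_cases hx : x ∈ A <;> simp [hx]
      rw [this]; exact hfi.indicator hAm
    have h3 : ∫ x, (σ * (f x * A.indicator (fun _ => (1:ℝ)) x) - A.indicator (fun _ => (1:ℝ)) x) ∂μ
        ≤ 0 := by
      rw [integral_sub (hfAi.const_mul σ) (hφ.integrable μ), integral_const_mul]
      linarith
    have h4 : 0 ≤ fun x => σ * (f x * A.indicator (fun _ => (1:ℝ)) x)
        - A.indicator (fun _ => (1:ℝ)) x := by
      intro x
      by_cases hx : x ∈ A
      · have : 1 < σ * f x := hx
        simp [hx]; linarith
      · simp [hx]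
    have h5 := (integral_eq_zero_iff_of_nonneg h4 ((hfAi.const_mul σ).sub (hφ.integrable μ))).1
      (le_antisymm h3 (integral_nonneg h4))
    filter_upwards [h5] with x hx
    by_contra hcon
    have hxA : x ∈ A := not_le.1 hcon
    have : 1 < σ * f x := hxA
    simp [hxA] at hx
    linarith
  have hae : (fun x => max (-1) (min 1 (f x))) =ᵐ[μ] f := by
    filter_upwards [key 1 (Or.inl rfl), key (-1) (Or.inr rfl)] with x h1 h2
    rw [min_eq_right (by linarith), max_eq_right (by linarith)]
  refine ⟨fun x => max (-1) (min 1 (f x)), hh, ⟨?_, ?_⟩, ?_⟩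
  · exact measurable_const.max (measurable_const.min hfm)
  · intro x
    rw [abs_le]
    exact ⟨le_max_left _ _, max_le (by norm_num) (min_le_left _ _)⟩
  · intro φ hφ
    have : ∫ x, max (-1) (min 1 (f x)) * φ x ∂μ = ∫ x, f x * φ x ∂μ := by
      refine integral_congr_ae ?_
      filter_upwards [hae] with x hx
      rw [hx]
    rw [this]
    exact hl φ hφ

/-- weak convergence lifts to extensions -/
lemma WL.joint {X : Type*} [MeasurableSpace X] {U : Ultrafilter ℕ} {T : X → X} {μ : Measure X}
    [IsProbabilityMeasure μ] (hT : Measurable T) {h F : X → ℝ} (hW : WL U T μ h F)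
    {Z : Type*} [MeasurableSpace Z] {ρ : Measure Z} [IsProbabilityMeasure ρ] {π : Z → X}
    (hπ : MeasurePreserving π ρ μ) {Ψ : Z → ℝ} (hΨ : BM Ψ) :
    Tendsto (fun n => ∫ z, h (T^[n] (π z)) * Ψ z ∂ρ) U (𝓝 (∫ z, F (π z) * Ψ z ∂ρ)) := by
  let ι : Lp ℝ 2 μ →L[ℝ] Lp ℝ 2 ρ := (Lp.compMeasurePreservingₗᵢ ℝ π hπ).toContinuousLinearMap
  let u : Lp ℝ 2 μ := ContinuousLinearMap.adjoint ι ((hΨ.memLp ρ 2).toLp Ψ)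
  have hu : MemLp u 2 μ := Lp.memLp u
  have key : ∀ f : X → ℝ, BM f → ∫ z, f (π z) * Ψ z ∂ρ = ∫ x, f x * u x ∂μ := by
    intro f hf
    have h1 : inner ℝ ((hf.memLp μ 2).toLp f) u = inner ℝ (ι ((hf.memLp μ 2).toLp f))
      ((hΨ.memLp ρ 2).toLp Ψ) := by
      simp only [u]; rw [ContinuousLinearMap.adjoint_inner_right]
    have h2 : ι ((hf.memLp μ 2).toLp f) = ((hf.comp hπ.measurable).memLp ρ 2).toLp _ := rfl
    rw [h2, inner_toLp] at h1
    have e : u = hu.toLp u := (Lp.toLp_coeFn u hu).symm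
    rw [e, inner_toLp] at h1
    rw [← h1]
  rw [key F hW.b2.bm]
  refine (hW.lim u hu).congr fun n => ?_
  rw [key (fun x => h (T^[n] x)) (hW.b1.comp (hT.iterate n)).bm]

/-- Iterated filter. -/
def FF (U : Ultrafilter ℕ) : ℕ → Filter (List ℕ)
  | 0 => pure []
  | m + 1 => (U : Filter ℕ).bind fun s => (FF U m).map (List.cons s)

lemma FF_neBot (U : Ultrafilter ℕ) (m : ℕ) : (FF U m).NeBot := by
  induction m with
  | zero => unfold FF; infer_instance
  | succ m ih =>
    refine ⟨fun h => ?_⟩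
    have h0 : (∅ : Set (List ℕ)) ∈ FF U (m + 1) := by rw [h]; exact mem_bot
    unfold FF at h0
    rw [mem_bind'] at h0
    obtain ⟨a, ha⟩ := U.nonempty_of_mem h0
    have : (∅ : Set (List ℕ)) ∈ map (List.cons a) (FF U m) := ha
    have h2 : (∅ : Set (List ℕ)) ∈ FF U m := by
      have := mem_map.1 this
      rwa [Set.preimage_empty] at this
    exact ih.ne (empty_mem_iff_bot.1 h2)

/-- product of shifted functions -/
def pr {X : Type*} (T : X → X) : List (X → ℝ) → List ℕ → X → ℝ
  | h :: hs, s :: ss, x => h (T^[s] x) * pr T hs ss x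
  | _, _, _ => 1

/-- plain product -/
def pp {X : Type*} : List (X → ℝ) → X → ℝ
  | [], _ => 1
  | h :: hs, x => h x * pp hs x

lemma pp_B1 {X : Type*} [MeasurableSpace X] (l : List (X → ℝ)) (hl : ∀ f ∈ l, B1 f) :
    B1 (pp l) := by
  induction l with
  | nil => exact ⟨measurable_const, fun z => by simp [pp]⟩
  | cons a l ih =>
    exact (hl a (by simp)).mul (ih fun f hf => hl f (by simp [hf]))

lemma pr_B1 {X : Type*} [MeasurableSpace X] {T : X → X} (hT : Measurable T) (l : List (X → ℝ))
    (hl : ∀ f ∈ l, B1 f) (ss : List ℕ) : B1 (pr T l ss) := by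
  induction l generalizing ss with
  | nil =>
    have : pr T [] ss = fun _ => 1 := by funext x; simp [pr]
    rw [this]; exact ⟨measurable_const, fun z => by simp⟩
  | cons a l ih =>
    cases ss with
    | nil =>
      have : pr T (a :: l) [] = fun _ => 1 := by funext x; simp [pr]
      rw [this]; exact ⟨measurable_const, fun z => by simp⟩
    | cons s ss =>
      exact ((hl a (by simp)).comp (hT.iterate s)).mul (ih (fun f hf => hl f (by simp [hf])) ss)

lemma pr_mul {X : Type*} (T : X → X) (l : List (X → ℝ)) (ss : List ℕ) (t : ℕ) (x : X) :
    pr T l ss x * pr T l ss (T^[t] x) = pr T (l.map fun h x => h x * h (T^[t] x)) ss x := by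
  induction l generalizing ss with
  | nil => simp [pr]
  | cons a l ih =>
    cases ss with
    | nil => simp [pr]
    | cons s ss =>
      simp only [pr, List.map_cons]
      rw [← ih ss, ← Function.iterate_add_apply, ← Function.iterate_add_apply, add_comm s t]
      ring

lemma tendsto_FF {X : Type*} [MeasurableSpace X] {U : Ultrafilter ℕ} {T : X → X} {μ : Measure X}
    [IsProbabilityMeasure μ] (hT : Measurable T)
    {Z : Type*} [MeasurableSpace Z] {ρ : Measure Z} [IsProbabilityMeasure ρ] {π : Z → X}
    (hπ : MeasurePreserving π ρ μ) (hs Fs : List (X → ℝ)) (hW : List.Forall₂ (WL U T μ) hs Fs)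
    {Ψ : Z → ℝ} (hΨ : BM Ψ) :
    Tendsto (fun ss => ∫ z, pr T hs ss (π z) * Ψ z ∂ρ) (FF U hs.length)
      (𝓝 (∫ z, pp Fs (π z) * Ψ z ∂ρ)) := by
  induction hW generalizing Ψ with
  | nil => simp [FF, pr, pp, tendsto_pure_left]; intro s hs; exact mem_of_mem_nhds hs
  | @cons h F hs Fs hhF hrest ih =>
    have hB : B1 (pp Fs) := by
      refine pp_B1 _ ?_
      clear ih
      induction hrest with
      | nil => simp
      | cons a b c => 
        intro f hf
        rcases List.mem_cons.1 hf with rfl | hf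
        · exact a.b2
        · exact c f hf
    have h1 := hhF.joint hT hπ (Ψ := fun z => pp Fs (π z) * Ψ z)
      ((hB.comp hπ.measurable).bm.mul hΨ)
    rw [tendsto_nhds]
    intro O hO hmem
    have e0 : ∫ z, pp (F :: Fs) (π z) * Ψ z ∂ρ = ∫ z, F (π z) * (pp Fs (π z) * Ψ z) ∂ρ := by
      simp only [pp, mul_assoc]
    rw [e0] at hmem
    have h2 := h1.eventually (hO.mem_nhds hmem)
    simp only [List.length_cons, FF]
    rw [mem_bind']
    filter_upwards [h2] with s hsO
    have h3 := ih (Ψ := fun z => h (T^[s] (π z)) * Ψ z)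
      (((hhF.b1.comp (hT.iterate s)).comp hπ.measurable).bm.mul hΨ)
    have e1 : ∫ z, pp Fs (π z) * (h (T^[s] (π z)) * Ψ z) ∂ρ =
        ∫ z, h (T^[s] (π z)) * (pp Fs (π z) * Ψ z) ∂ρ := by
      congr 1; ext z; ring
    rw [e1] at h3
    have h4 := h3.eventually (hO.mem_nhds hsO)
    rw [mem_map]
    filter_upwards [h4] with ss hss
    have e2 : ∫ z, pr T (h :: hs) (s :: ss) (π z) * Ψ z ∂ρ =
        ∫ z, pr T hs ss (π z) * (h (T^[s] (π z)) * Ψ z) ∂ρ := by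
      congr 1; ext z; simp only [pr]; ring
    change ∫ z, pr T (h :: hs) (s :: ss) (π z) * Ψ z ∂ρ ∈ O
    rw [e2]
    exact hss

end NMix

namespace NMix

lemma exists_gap_set {E : Set ℕ} (hE : ∀ N, ∃ n ∈ E, N ≤ n) (M K : ℕ) :
    ∃ s : Finset ℕ, s.card = K ∧ (∀ n ∈ s, n ∈ E) ∧
      ∀ n ∈ s, ∀ m ∈ s, n ≠ m → M ≤ (n - m) + (m - n) := by
  induction K with
  | zero => exact ⟨∅, by simp⟩
  | succ K ih =>
    obtain ⟨s, h1, h2, h3⟩ := ih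
    obtain ⟨n, hn, hN⟩ := hE (s.sup id + M + 1)
    have hle : ∀ m ∈ s, m ≤ s.sup id := fun m hm => Finset.le_sup (f := id) hm
    have hns : n ∉ s := fun h => by have := hle n h; omega
    refine ⟨insert n s, by rw [Finset.card_insert_of_notMem hns, h1], ?_, ?_⟩
    · intro m hm
      rcases Finset.mem_insert.1 hm with rfl | hm
      · exact hn
      · exact h2 m hm
    · intro a ha b hb hab
      rcases Finset.mem_insert.1 ha with ha1 | ha1 <;>
        rcases Finset.mem_insert.1 hb with hb1 | hb1
      · exact absurd (ha1.trans hb1.symm) hab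
      · have := hle b hb1; omega
      · have := hle a ha1; omega
      · exact h3 a ha1 b hb1 hab

lemma vdc {U : Ultrafilter ℕ} (hU : (U : Filter ℕ) ≤ atTop) {a D : ℕ → ℝ} {c : ℝ}
    (ha : Tendsto a U (𝓝 c)) (hD : Tendsto D atTop (𝓝 0))
    (hs : ∀ s : Finset ℕ, (∑ n ∈ s, a n) ^ 2 ≤ ∑ n ∈ s, ∑ m ∈ s, D ((n - m) + (m - n))) :
    c = 0 := by
  by_contra hc
  have hc2 : 0 < c ^ 2 := by positivity
  have hE : ∀ᶠ n in U, |a n - c| < |c| / 2 := by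
    have := ha.eventually (Metric.ball_mem_nhds c (show 0 < |c| / 2 by positivity))
    simpa [Metric.mem_ball, Real.dist_eq] using this
  have hE' : ∀ N, ∃ n ∈ {n | |a n - c| < |c| / 2}, N ≤ n := by
    intro N
    have h2 : ∀ᶠ n in U, N ≤ n := hU (eventually_ge_atTop N)
    obtain ⟨n, hn⟩ := (hE.and h2).exists
    exact ⟨n, hn.1, hn.2⟩
  obtain ⟨M, hM⟩ : ∃ M, ∀ t ≥ M, D t ≤ c ^ 2 / 8 := by
    have := hD.eventually (gt_mem_nhds (show 0 < c ^ 2 / 8 by positivity))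
    obtain ⟨M, hM⟩ := eventually_atTop.1 this
    exact ⟨M, fun t ht => (hM t ht).le⟩
  obtain ⟨K, hK⟩ := exists_nat_gt (8 * |D 0| / c ^ 2)
  obtain ⟨s, hcard, hsE, hgap⟩ := exists_gap_set hE' M K
  have hup : ∑ n ∈ s, ∑ m ∈ s, D ((n - m) + (m - n)) ≤ K * |D 0| + K * (K * (c ^ 2 / 8)) := by
    have : ∀ n ∈ s, ∑ m ∈ s, D ((n - m) + (m - n)) ≤ |D 0| + K * (c ^ 2 / 8) := by
      intro n hn
      have : ∀ m ∈ s, D ((n - m) + (m - n)) ≤ (if n = m then |D 0| else 0) + c ^ 2 / 8 := by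
        intro m hm
        split_ifs with h
        · subst h
          simp only [Nat.sub_self, Nat.add_zero]
          have := le_abs_self (D 0)
          linarith
        · rw [zero_add]; exact hM _ (hgap n hn m hm h)
      refine (Finset.sum_le_sum this).trans ?_
      rw [Finset.sum_add_distrib, Finset.sum_ite_eq]
      simp [hn, hcard]
    refine (Finset.sum_le_sum this).trans ?_
    rw [Finset.sum_const, hcard, nsmul_eq_mul]
    exact (by ring : (K:ℝ) * (|D 0| + K * (c ^ 2 / 8)) = _).le
  have hlow : K * (c ^ 2 / 2) ≤ c * ∑ n ∈ s, a n := by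
    rw [Finset.mul_sum, ← hcard, ← nsmul_eq_mul, ← Finset.sum_const]
    refine Finset.sum_le_sum fun n hn => ?_
    have h1 : |a n - c| < |c| / 2 := hsE n hn
    have h2 : |c * (a n - c)| ≤ c ^ 2 / 2 := by
      rw [abs_mul, ← sq_abs c]
      nlinarith [abs_nonneg c]
    have := (abs_le.1 h2).1
    nlinarith
  have h3 := hs s
  have h4 : (K * (c ^ 2 / 2)) ^ 2 ≤ c ^ 2 * (∑ n ∈ s, a n) ^ 2 := by
    rw [← mul_pow]
    exact pow_le_pow_left₀ (by positivity) hlow 2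
  have hK' : 8 * |D 0| < K * c ^ 2 := by rwa [div_lt_iff₀ hc2] at hK
  have hKpos : (0:ℝ) < K := lt_of_le_of_lt (by positivity) hK
  have h5 : (K * (c ^ 2 / 2)) ^ 2 ≤ c ^ 2 * (K * |D 0| + K * (K * (c ^ 2 / 8))) :=
    h4.trans (mul_le_mul_of_nonneg_left (h3.trans hup) hc2.le)
  have h6 : c ^ 2 * K * (K * c ^ 2) ≤ c ^ 2 * K * (8 * |D 0|) := by nlinarith
  have h7 := le_of_mul_le_mul_left h6 (by positivity)
  linarith

lemma integral_comp_mp {Z W : Type*} [MeasurableSpace Z] [MeasurableSpace W] {ρ : Measure Z}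
    {σ : Measure W} {p : Z → W} (hp : MeasurePreserving p ρ σ) {f : W → ℝ} (hf : Measurable f) :
    ∫ z, f (p z) ∂ρ = ∫ w, f w ∂σ := by
  rw [← hp.map_eq, integral_map hp.measurable.aemeasurable hf.aestronglyMeasurable]

lemma sq_integral_le {Z : Type*} [MeasurableSpace Z] {ρ : Measure Z} [IsProbabilityMeasure ρ]
    {f g : Z → ℝ} (hf : B1 f) (hg : BM g) :
    (∫ z, f z * g z ∂ρ) ^ 2 ≤ ∫ z, g z * g z ∂ρ := by
  set I := ∫ z, f z * g z ∂ρ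
  have h : 0 ≤ ∫ z, (g z * g z - 2 * I * (f z * g z) + I ^ 2 * 1) ∂ρ := by
    refine integral_nonneg fun z => ?_
    have h1 := hf.2 z
    have h2 : f z ^ 2 ≤ 1 := by rw [← sq_abs]; exact pow_le_one₀ (abs_nonneg _) h1
    have : 0 ≤ (g z - I * f z) ^ 2 := sq_nonneg _
    simp only [Pi.zero_apply]
    nlinarith [sq_nonneg I, mul_le_mul_of_nonneg_left h2 (sq_nonneg I)]
  have e : ∫ z, (g z * g z - 2 * I * (f z * g z) + I ^ 2 * 1) ∂ρ
      = (∫ z, g z * g z ∂ρ) - 2 * I * I + I ^ 2 := by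
    rw [integral_add, integral_sub, integral_const_mul]
    · simp [I]
    · exact (hg.mul hg).integrable ρ
    · exact (hf.bm.mul hg).integrable ρ |>.const_mul _
    · exact ((hg.mul hg).integrable ρ).sub ((hf.bm.mul hg).integrable ρ |>.const_mul _)
    · exact integrable_const _
  rw [e] at h
  nlinarith

lemma forall_B1_left {X : Type*} [MeasurableSpace X] {U : Ultrafilter ℕ} {T : X → X}
    {μ : Measure X} {hs Fs : List (X → ℝ)} (hW : List.Forall₂ (WL U T μ) hs Fs) :
    (∀ f ∈ hs, B1 f) ∧ ∀ f ∈ Fs, B1 f := by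
  induction hW with
  | nil => simp
  | cons a b c =>
    refine ⟨fun f hf => ?_, fun f hf => ?_⟩
    · rcases List.mem_cons.1 hf with rfl | hf
      · exact a.b1
      · exact c.1 f hf
    · rcases List.mem_cons.1 hf with rfl | hf
      · exact a.b2
      · exact c.2 f hf

/-- finite-`s` van der Corput estimate -/
lemma vdc_finite {X Z : Type*} [MeasurableSpace X] [MeasurableSpace Z] {T : X → X} {R : Z → Z}
    {π : Z → X} {ρ : Measure Z} [IsProbabilityMeasure ρ] (hR : MeasurePreserving R ρ ρ)
    (hT : Measurable T) (hπ : Measurable π) (hc : ∀ z, π (R z) = T (π z)) {h : X → ℝ} (hh : B1 h)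
    {q : Z → ℝ} (hq : BM q) (s : Finset ℕ) :
    (∑ n ∈ s, ∫ z, h (T^[n] (π z)) * q z ∂ρ) ^ 2 ≤
      ∑ n ∈ s, ∑ m ∈ s, ∫ z, q z * q (R^[(n - m) + (m - n)] z) ∂ρ := by
  have hcn : ∀ n z, π (R^[n] z) = T^[n] (π z) := by
    intro n
    induction n with
    | zero => simp
    | succ n ih => intro z; rw [Function.iterate_succ_apply, Function.iterate_succ_apply, ih, hc]
  have hRn : ∀ n, MeasurePreserving (R^[n]) ρ ρ := fun n => hR.iterate n
  set N := s.sup id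
  have hle : ∀ m ∈ s, m ≤ N := fun m hm => Finset.le_sup (f := id) hm
  have hV : ∀ n, BM (fun z => q (R^[N - n] z)) := fun n => hq.comp (hRn _).measurable
  have hH : B1 (fun z => h (T^[N] (π z))) := (hh.comp (hT.iterate N)).comp hπ
  have e1 : ∑ n ∈ s, ∫ z, h (T^[n] (π z)) * q z ∂ρ
      = ∫ z, h (T^[N] (π z)) * ∑ n ∈ s, q (R^[N - n] z) ∂ρ := by
    simp only [Finset.mul_sum]
    rw [integral_finsetSum _ fun n _ => (hH.bm.mul (hV n)).integrable ρ]
    refine Finset.sum_congr rfl fun n hn => ?_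
    have hm : Measurable fun z => h (T^[n] (π z)) * q z :=
      (((hh.comp (hT.iterate n)).comp hπ).bm.mul hq).1
    rw [← integral_comp_mp (hRn (N - n)) hm]
    congr 1; ext z
    rw [hcn, ← Function.iterate_add_apply, Nat.add_sub_cancel' (hle n hn)]
  rw [e1]
  refine (sq_integral_le hH (BM.sum s fun n _ => hV n)).trans (le_of_eq ?_)
  simp only [Finset.sum_mul_sum]
  rw [integral_finsetSum _ fun n _ => (BM.sum s fun m _ => (hV n).mul (hV m)).integrable ρ]
  refine Finset.sum_congr rfl fun n hn => ?_
  rw [integral_finsetSum _ fun m _ => ((hV n).mul (hV m)).integrable ρ]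
  refine Finset.sum_congr rfl fun m hm => ?_
  have hmeas : ∀ t, Measurable fun z => q z * q (R^[t] z) :=
    fun t => (hq.mul (hq.comp (hRn t).measurable)).1
  have hn' := hle n hn
  have hm' := hle m hm
  rcases le_total n m with h | h
  · rw [← integral_comp_mp (hRn (N - m)) (hmeas _)]
    congr 1; ext z
    rw [← Function.iterate_add_apply, mul_comm]
    congr 3; omega
  · rw [← integral_comp_mp (hRn (N - n)) (hmeas _)]
    congr 1; ext z
    rw [← Function.iterate_add_apply]
    congr 3; omega

theorem core {X Y Z : Type*} [MeasurableSpace X] [MeasurableSpace Y] [MeasurableSpace Z]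
    {U : Ultrafilter ℕ} (hU : (U : Filter ℕ) ≤ atTop)
    {T : X → X} {S : Y → Y} {R : Z → Z} {π : Z → X} {τ : Z → Y}
    {μ : Measure X} {ν : Measure Y} {ρ : Measure Z} [IsProbabilityMeasure μ]
    [IsProbabilityMeasure ν] [IsProbabilityMeasure ρ]
    (hT : Measurable T) (hS : Measurable S) (hmix : MeasureMixing S ν)
    (hR : MeasurePreserving R ρ ρ) (hπ : MeasurePreserving π ρ μ) (hτ : MeasurePreserving τ ρ ν)
    (hcπ : ∀ z, π (R z) = T (π z)) (hcτ : ∀ z, τ (R z) = S (τ z)) (k : ℕ) :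
    ∀ hs Fs : List (X → ℝ), hs.length = k → List.Forall₂ (WL U T μ) hs Fs →
      ∀ g : SimpleFunc Y ℝ, ∫ y, g y ∂ν = 0 → ∫ z, pp Fs (π z) * g (τ z) ∂ρ = 0 := by
  have hcn : ∀ n z, τ (R^[n] z) = S^[n] (τ z) := by
    intro n
    induction n with
    | zero => simp
    | succ n ih => intro z; rw [Function.iterate_succ_apply, Function.iterate_succ_apply, ih, hcτ]
  have hcn' : ∀ n z, π (R^[n] z) = T^[n] (π z) := by
    intro n
    induction n with
    | zero => simp
    | succ n ih => intro z; rw [Function.iterate_succ_apply, Function.iterate_succ_apply, ih, hcπ]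
  induction k with
  | zero =>
    intro hs Fs hl hW g hg
    have : hs = [] := List.length_eq_zero_iff.1 hl
    subst this
    cases hW
    simp only [pp, one_mul]
    rw [integral_comp_mp hτ g.measurable, hg]
  | succ k ih =>
    intro hs Fs hl hW g hg
    cases hW with
    | nil => simp at hl
    | @cons h F hs Fs hhF hrest =>
      have hlen : hs.length = k := by simpa using hl
      obtain ⟨hB, hB'⟩ := forall_B1_left hrest
      have hgτ : BM (fun z => g (τ z)) := (BM.simple g).comp hτ.measurable
      -- weak limits of products
      have hex : ∀ (t : ℕ) (h : X → ℝ), ∃ G, B1 h → WL U T μ (fun x => h x * h (T^[t] x)) G := by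
        intro t h
        by_cases hh : B1 h
        · obtain ⟨G, hG⟩ := exists_WL U (μ := μ) hT (hh.mul (hh.comp (hT.iterate t)))
          exact ⟨G, fun _ => hG⟩
        · exact ⟨h, fun h' => absurd h' hh⟩
      choose G hG using hex
      have hWG : ∀ t, List.Forall₂ (WL U T μ) (hs.map fun h x => h x * h (T^[t] x))
          (hs.map (G t)) := by
        intro t
        rw [List.forall₂_map_left_iff, List.forall₂_map_right_iff, List.forall₂_same]
        exact fun x hx => hG t x (hB x hx)
      have hgS : ∀ t, Measurable fun y => g (S^[t] y) :=
        fun t => g.measurable.comp (hS.iterate t)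
      let D : ℕ → ℝ := fun t => ∫ z, pp (hs.map (G t)) (π z) * (g (τ z) * g (S^[t] (τ z))) ∂ρ
      have hBt : ∀ t, B1 (fun z => pp (hs.map (G t)) (π z)) := fun t =>
        (pp_B1 _ (forall_B1_left (hWG t)).2).comp hπ.measurable
      have hDt : ∀ t, D t = (∫ y, g y * g (S^[t] y) ∂ν) * ∫ z, pp (hs.map (G t)) (π z) ∂ρ := by
        intro t
        set e := ∫ y, g y * g (S^[t] y) ∂ν
        let gt : SimpleFunc Y ℝ := g * g.comp (S^[t]) (hS.iterate t) - SimpleFunc.const Y e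
        have hgt : ∀ y, gt y = g y * g (S^[t] y) - e := fun y => rfl
        have h1 := ih _ _ (by simpa using hlen) (hWG t) gt (by
          simp only [hgt]
          rw [integral_sub]
          · simp [e]
          · exact ((BM.simple g).mul ((BM.simple g).comp (hS.iterate t))).integrable ν
          · exact integrable_const _)
        simp only [hgt, mul_sub] at h1
        rw [integral_sub, integral_mul_const] at h1
        · simp only [D]; linarith
        · exact ((hBt t).bm.mul (hgτ.mul ((((BM.simple g).comp (hS.iterate t))).comp
            hτ.measurable))).integrable ρ
        · exact ((hBt t).bm.mul (BM.const e)).integrable ρ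
      have hD0 : Tendsto D atTop (𝓝 0) := by
        have h1 := mixing_simple hS hmix g g
        rw [hg, mul_zero] at h1
        refine squeeze_zero_norm (fun t => ?_) (by simpa using h1.abs)
        rw [hDt, Real.norm_eq_abs, abs_mul]
        exact mul_le_of_le_one_right (abs_nonneg _) ((hBt t).abs_integral_le ρ)
      have hlim := hhF.joint hT hπ (Ψ := fun z => pp Fs (π z) * g (τ z))
        (((pp_B1 _ hB').comp hπ.measurable).bm.mul hgτ)
      have e0 : ∫ z, pp (F :: Fs) (π z) * g (τ z) ∂ρ = ∫ z, F (π z) * (pp Fs (π z) * g (τ z)) ∂ρ := by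
        simp only [pp, mul_assoc]
      rw [e0]
      refine vdc hU hlim hD0 fun s => ?_
      have := FF_neBot U hs.length
      have hl1 : Tendsto (fun ss => (∑ n ∈ s, ∫ z, h (T^[n] (π z)) * (pr T hs ss (π z) * g (τ z)) ∂ρ) ^ 2)
          (FF U hs.length)
          (𝓝 ((∑ n ∈ s, ∫ z, h (T^[n] (π z)) * (pp Fs (π z) * g (τ z)) ∂ρ) ^ 2)) := by
        refine Tendsto.pow (tendsto_finsetSum _ fun n _ => ?_) 2
        have := tendsto_FF hT hπ hs Fs hrest (Ψ := fun z => h (T^[n] (π z)) * g (τ z))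
          (((hhF.b1.comp (hT.iterate n)).comp hπ.measurable).bm.mul hgτ)
        simpa only [mul_left_comm] using this
      have hl2 : Tendsto (fun ss => ∑ n ∈ s, ∑ m ∈ s,
            ∫ z, (pr T hs ss (π z) * g (τ z)) * (pr T hs ss (π (R^[(n - m) + (m - n)] z)) *
              g (τ (R^[(n - m) + (m - n)] z))) ∂ρ)
          (FF U hs.length) (𝓝 (∑ n ∈ s, ∑ m ∈ s, D ((n - m) + (m - n)))) := by
        refine tendsto_finsetSum _ fun n _ => tendsto_finsetSum _ fun m _ => ?_
        generalize (n - m) + (m - n) = t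
        have := tendsto_FF hT hπ _ _ (hWG t) (Ψ := fun z => g (τ z) * g (S^[t] (τ z)))
          (hgτ.mul ((((BM.simple g).comp (hS.iterate t))).comp hτ.measurable))
        rw [List.length_map] at this
        refine this.congr fun ss => ?_
        congr 1; ext z
        rw [← pr_mul, hcn, hcn']
        ring
      refine le_of_tendsto_of_tendsto' hl1 hl2 fun ss => ?_
      exact vdc_finite hR hT hπ.measurable hcπ hhF.b1
        (((pr_B1 hT hs hB ss).comp hπ.measurable).bm.mul hgτ) s

end NMix

namespace NMix

section ext
variable {X Z : Type*} [MeasurableSpace X] [MeasurableSpace Z]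

/-- the annihilator condition -/
def NN (𝓕 : Set (X → ℝ)) (π : Z → X) (ρ : Measure Z) (Γ : Z → ℝ) (Φ : X → ℝ) : Prop :=
  BM Φ ∧ ∀ l : List (X → ℝ), (∀ f ∈ l, f ∈ 𝓕) → ∫ z, Φ (π z) * (pp l (π z) * Γ z) ∂ρ = 0

variable {𝓕 : Set (X → ℝ)} {π : Z → X} {ρ : Measure Z} {Γ : Z → ℝ}

lemma NN.smul {Φ : X → ℝ} (h : NN 𝓕 π ρ Γ Φ) (c : ℝ) : NN 𝓕 π ρ Γ (fun x => c * Φ x) := by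
  refine ⟨(BM.const c).mul h.1, fun l hl => ?_⟩
  simp only [mul_assoc]
  rw [integral_const_mul, h.2 l hl, mul_zero]

variable [IsProbabilityMeasure ρ]

lemma NN.add (h𝓕 : ∀ f ∈ 𝓕, B1 f) (hπ : Measurable π) (hΓ : BM Γ) {Φ Ψ : X → ℝ}
    (h : NN 𝓕 π ρ Γ Φ) (h' : NN 𝓕 π ρ Γ Ψ) : NN 𝓕 π ρ Γ (fun x => Φ x + Ψ x) := by
  refine ⟨h.1.add h'.1, fun l hl => ?_⟩
  have hb := ((pp_B1 l fun f hf => h𝓕 f (hl f hf)).comp hπ).bm.mul hΓ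
  simp only [add_mul]
  rw [integral_add (((h.1.comp hπ).mul hb).integrable ρ) (((h'.1.comp hπ).mul hb).integrable ρ),
    h.2 l hl, h'.2 l hl, add_zero]

lemma NN.lim (h𝓕 : ∀ f ∈ 𝓕, B1 f) (hπ : Measurable π) (hΓ : BM Γ) {Φ : ℕ → X → ℝ} {Ψ : X → ℝ}
    (h : ∀ n, NN 𝓕 π ρ Γ (Φ n)) {C : ℝ} (hC : ∀ n x, |Φ n x| ≤ C)
    (hlim : ∀ x, Tendsto (fun n => Φ n x) atTop (𝓝 (Ψ x))) : NN 𝓕 π ρ Γ Ψ := by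
  refine ⟨⟨measurable_of_tendsto_metrizable (fun n => (h n).1.1) (tendsto_pi_nhds.2 hlim), C,
    fun x => le_of_tendsto (hlim x).abs (Eventually.of_forall fun n => hC n x)⟩, fun l hl => ?_⟩
  have hb := ((pp_B1 l fun f hf => h𝓕 f (hl f hf)).comp hπ).bm.mul hΓ
  obtain ⟨D, hD⟩ := hb.2
  have h1 := tendsto_integral_of_dominated_convergence (μ := ρ)
    (F := fun n z => Φ n (π z) * (pp l (π z) * Γ z)) (f := fun z => Ψ (π z) * (pp l (π z) * Γ z))
    (fun _ => C * D) (fun n => (((h n).1.comp hπ).mul hb).1.aestronglyMeasurable)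
    (integrable_const _) (fun n => Eventually.of_forall fun z => by
      rw [norm_mul]
      exact mul_le_mul (hC n _) (hD z) (norm_nonneg _) ((abs_nonneg _).trans (hC n (π z))))
    (Eventually.of_forall fun z => (hlim (π z)).mul_const _)
  have h2 : ∀ n, ∫ z, Φ n (π z) * (pp l (π z) * Γ z) ∂ρ = 0 := fun n => (h n).2 l hl
  simp only [h2] at h1
  exact tendsto_nhds_unique h1 tendsto_const_nhds

lemma NN.mul {Φ F : X → ℝ} (h𝓕 : ∀ f ∈ 𝓕, B1 f) (h : NN 𝓕 π ρ Γ Φ) (hF : F ∈ 𝓕) :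
    NN 𝓕 π ρ Γ (fun x => Φ x * F x) := by
  refine ⟨h.1.mul (h𝓕 F hF).bm, fun l hl => ?_⟩
  have := h.2 (F :: l) (by
    intro f hf
    rcases List.mem_cons.1 hf with rfl | hf
    · exact hF
    · exact hl f hf)
  simpa only [pp, mul_assoc] using this

lemma NN.poly {Φ F : X → ℝ} (h𝓕 : ∀ f ∈ 𝓕, B1 f) (hπ : Measurable π) (hΓ : BM Γ)
    (h : NN 𝓕 π ρ Γ Φ) (hF : F ∈ 𝓕) (p : Polynomial ℝ) :
    NN 𝓕 π ρ Γ (fun x => Φ x * p.eval (F x)) := by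
  induction p using Polynomial.induction_on' with
  | add p q hp hq =>
    simp only [Polynomial.eval_add, mul_add]
    exact hp.add h𝓕 hπ hΓ hq
  | monomial n a =>
    induction n with
    | zero => simpa [mul_comm] using h.smul a
    | succ n ih =>
      have := ih.mul h𝓕 hF
      simpa only [Polynomial.eval_monomial, pow_succ, mul_assoc] using this

lemma NN.cont {Φ F : X → ℝ} (h𝓕 : ∀ f ∈ 𝓕, B1 f) (hπ : Measurable π) (hΓ : BM Γ)
    (h : NN 𝓕 π ρ Γ Φ) (hF : F ∈ 𝓕) {u : ℝ → ℝ} (hu : Continuous u) :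
    NN 𝓕 π ρ Γ (fun x => Φ x * u (F x)) := by
  have hp : ∀ n : ℕ, ∃ p : Polynomial ℝ, ∀ x ∈ Set.Icc (-1:ℝ) 1,
      |p.eval x - u x| < 1 / ((n:ℝ) + 1) := fun n =>
    exists_polynomial_near_of_continuousOn (-1) 1 u hu.continuousOn _ (by positivity)
  choose p hp using hp
  obtain ⟨C, hC⟩ := isCompact_Icc.exists_bound_of_continuousOn (s := Set.Icc (-1:ℝ) 1)
    hu.continuousOn
  obtain ⟨K, hK⟩ := h.1.2
  have hI : ∀ x, F x ∈ Set.Icc (-1:ℝ) 1 := fun x => abs_le.1 ((h𝓕 F hF).2 x)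
  refine NN.lim h𝓕 hπ hΓ (fun n => h.poly h𝓕 hπ hΓ hF (p n)) (C := K * (C + 1)) ?_ ?_
  · intro n x
    rw [abs_mul]
    refine mul_le_mul (hK x) ?_ (abs_nonneg _) ((abs_nonneg _).trans (hK x))
    have h1 := hp n (F x) (hI x)
    have h2 := hC (F x) (hI x)
    have h3 : 1 / ((n:ℝ) + 1) ≤ 1 := by
      rw [div_le_one (by positivity)]; linarith [(Nat.cast_nonneg n : (0:ℝ) ≤ n)]
    rw [Real.norm_eq_abs] at h2
    have : |(p n).eval (F x)| ≤ |(p n).eval (F x) - u (F x)| + |u (F x)| := by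
      simpa using abs_add_le ((p n).eval (F x) - u (F x)) (u (F x))
    linarith
  · intro x
    refine Tendsto.const_mul _ ?_
    rw [tendsto_iff_dist_tendsto_zero]
    refine squeeze_zero (fun _ => dist_nonneg) (fun n => ?_) tendsto_one_div_add_atTop_nhds_zero_nat
    rw [Real.dist_eq]
    exact (hp n (F x) (hI x)).le

lemma NN.gt {Φ F : X → ℝ} (h𝓕 : ∀ f ∈ 𝓕, B1 f) (hπ : Measurable π) (hΓ : BM Γ)
    (h : NN 𝓕 π ρ Γ Φ) (hF : F ∈ 𝓕) (c : ℝ) :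
    NN 𝓕 π ρ Γ (fun x => Φ x * {x | c < F x}.indicator (fun _ => (1:ℝ)) x) := by
  obtain ⟨K, hK⟩ := h.1.2
  refine NN.lim h𝓕 hπ hΓ (fun n : ℕ => h.cont h𝓕 hπ hΓ hF
    (u := fun r => min 1 (n * max (r - c) 0)) (by fun_prop)) (C := K) ?_ ?_
  · intro n x
    rw [abs_mul]
    have h1 : |min 1 ((n:ℝ) * max (F x - c) 0)| ≤ 1 := by
      rw [abs_of_nonneg (le_min zero_le_one (by positivity))]
      exact min_le_left _ _
    exact (mul_le_of_le_one_right (abs_nonneg _) h1).trans (hK x)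
  · intro x
    refine Tendsto.const_mul _ ?_
    by_cases hx : c < F x
    · have hpos : 0 < F x - c := sub_pos.2 hx
      have e : {x | c < F x}.indicator (fun _ => (1:ℝ)) x = 1 := by simp [hx]
      rw [e]
      refine tendsto_const_nhds.congr' ?_
      obtain ⟨N, hN⟩ := exists_nat_gt (1 / (F x - c))
      filter_upwards [eventually_ge_atTop N] with n hn
      rw [max_eq_left hpos.le, min_eq_left]
      rw [div_lt_iff₀ hpos] at hN
      have : (N:ℝ) ≤ n := by exact_mod_cast hn
      nlinarith
    · have e : {x | c < F x}.indicator (fun _ => (1:ℝ)) x = 0 := by simp [hx]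
      rw [e]
      refine tendsto_const_nhds.congr fun n => ?_
      rw [max_eq_right (by linarith)]
      simp

/-- the generated sigma-algebra -/
@[reducible] def SA (𝓕 : Set (X → ℝ)) : MeasurableSpace X :=
  MeasurableSpace.generateFrom {A | ∃ F ∈ 𝓕, ∃ c : ℝ, A = {x | c < F x}}

lemma NN.set (h𝓕 : ∀ f ∈ 𝓕, B1 f) (hπ : Measurable π) (hΓ : BM Γ) {A : Set X}
    (hA : MeasurableSet[SA 𝓕] A) :
    ∀ Φ, NN 𝓕 π ρ Γ Φ → NN 𝓕 π ρ Γ (fun x => Φ x * A.indicator (fun _ => (1:ℝ)) x) := by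
  have hcompl : ∀ A : Set X,
      (∀ Φ, NN 𝓕 π ρ Γ Φ → NN 𝓕 π ρ Γ (fun x => Φ x * A.indicator (fun _ => (1:ℝ)) x)) →
      (∀ Φ, NN 𝓕 π ρ Γ Φ → NN 𝓕 π ρ Γ (fun x => Φ x * Aᶜ.indicator (fun _ => (1:ℝ)) x)) := by
    intro A hA Φ hΦ
    have := hΦ.add h𝓕 hπ hΓ ((hA Φ hΦ).smul (-1))
    convert this using 2 with x
    by_cases hx : x ∈ A <;> simp [hx]
  have hinter : ∀ A B : Set X,
      (∀ Φ, NN 𝓕 π ρ Γ Φ → NN 𝓕 π ρ Γ (fun x => Φ x * A.indicator (fun _ => (1:ℝ)) x)) →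
      (∀ Φ, NN 𝓕 π ρ Γ Φ → NN 𝓕 π ρ Γ (fun x => Φ x * B.indicator (fun _ => (1:ℝ)) x)) →
      (∀ Φ, NN 𝓕 π ρ Γ Φ → NN 𝓕 π ρ Γ (fun x => Φ x * (A ∩ B).indicator (fun _ => (1:ℝ)) x)) := by
    intro A B hA hB Φ hΦ
    have := hB _ (hA Φ hΦ)
    convert this using 2 with x
    by_cases hx : x ∈ A <;> by_cases hx' : x ∈ B <;> simp [hx, hx']
  have hunion : ∀ A B : Set X,
      (∀ Φ, NN 𝓕 π ρ Γ Φ → NN 𝓕 π ρ Γ (fun x => Φ x * A.indicator (fun _ => (1:ℝ)) x)) →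
      (∀ Φ, NN 𝓕 π ρ Γ Φ → NN 𝓕 π ρ Γ (fun x => Φ x * B.indicator (fun _ => (1:ℝ)) x)) →
      (∀ Φ, NN 𝓕 π ρ Γ Φ → NN 𝓕 π ρ Γ (fun x => Φ x * (A ∪ B).indicator (fun _ => (1:ℝ)) x)) := by
    intro A B hA hB
    have := hcompl _ (hinter _ _ (hcompl A hA) (hcompl B hB))
    rwa [Set.compl_inter, compl_compl, compl_compl] at this
  induction A, hA using MeasurableSpace.generateFrom_induction with
  | hC A hA _ =>
    obtain ⟨F, hF, c, rfl⟩ := hA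
    exact fun Φ hΦ => hΦ.gt h𝓕 hπ hΓ hF c
  | empty => intro Φ hΦ; simpa using hΦ.smul 0
  | compl A _ hA => exact hcompl A hA
  | iUnion s _ hs =>
    intro Φ hΦ
    have hacc : ∀ n : ℕ, ∀ Φ, NN 𝓕 π ρ Γ Φ →
        NN 𝓕 π ρ Γ (fun x => Φ x * (Set.accumulate s n).indicator (fun _ => (1:ℝ)) x) := by
      intro n
      induction n with
      | zero => rw [Set.accumulate_zero_nat]; exact hs 0
      | succ n ih => rw [Set.accumulate_succ]; exact hunion _ _ ih (hs _)
    obtain ⟨K, hK⟩ := hΦ.1.2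
    refine NN.lim h𝓕 hπ hΓ (fun n => hacc n Φ hΦ) (C := K) ?_ ?_
    · intro n x
      refine le_trans ?_ (hK x)
      by_cases hx : x ∈ Set.accumulate s n <;> simp [hx]
    · intro x
      refine Tendsto.const_mul _ ?_
      have := Monotone.tendsto_indicator (Set.accumulate s) Set.monotone_accumulate (fun _ => (1:ℝ)) x
      rw [Set.iUnion_accumulate] at this
      exact this.mono_right (pure_le_nhds _)

lemma SA_orth (h𝓕 : ∀ f ∈ 𝓕, B1 f) (hπ : Measurable π) (hΓ : BM Γ)
    (h0 : ∀ l : List (X → ℝ), (∀ f ∈ l, f ∈ 𝓕) → ∫ z, pp l (π z) * Γ z ∂ρ = 0)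
    {A : Set X} (hA : MeasurableSet[SA 𝓕] A) :
    ∫ z, A.indicator (fun _ => (1:ℝ)) (π z) * Γ z ∂ρ = 0 := by
  have h1 : NN 𝓕 π ρ Γ (fun _ => 1) := ⟨BM.const 1, fun l hl => by simpa using h0 l hl⟩
  have := (NN.set h𝓕 hπ hΓ hA _ h1).2 [] (by simp)
  simpa [pp] using this

end ext

/-- The family of all weak limits -/
def WLS {X : Type*} [MeasurableSpace X] (U : Ultrafilter ℕ) (T : X → X) (μ : Measure X) :
    Set (X → ℝ) := {F | ∃ h, WL U T μ h F}

lemma SA_le {X : Type*} [mX : MeasurableSpace X] {𝓕 : Set (X → ℝ)} (h𝓕 : ∀ f ∈ 𝓕, B1 f) :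
    SA 𝓕 ≤ mX := by
  refine MeasurableSpace.generateFrom_le ?_
  rintro _ ⟨F, hF, c, rfl⟩
  exact measurableSet_lt measurable_const (h𝓕 F hF).1

/-- independence over a joining on the full sigma-algebra -/
theorem indep_of_joining {X Y Z : Type*} [MeasurableSpace X] [MeasurableSpace Y]
    [MeasurableSpace Z]
    {U : Ultrafilter ℕ} (hU : (U : Filter ℕ) ≤ atTop)
    {T : X → X} {S : Y → Y} {R : Z → Z} {π : Z → X} {τ : Z → Y}
    {μ : Measure X} {ν : Measure Y} {ρ : Measure Z} [IsProbabilityMeasure μ]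
    [IsProbabilityMeasure ν] [IsProbabilityMeasure ρ]
    (hT : Measurable T) (hS : Measurable S) (hmix : MeasureMixing S ν)
    (hR : MeasurePreserving R ρ ρ) (hπ : MeasurePreserving π ρ μ) (hτ : MeasurePreserving τ ρ ν)
    (hcπ : ∀ z, π (R z) = T (π z)) (hcτ : ∀ z, τ (R z) = S (τ z))
    {A : Set X} (hA : MeasurableSet[SA (WLS U T μ)] A) {C : Set Y} (hC : MeasurableSet C) :
    ρ (π ⁻¹' A ∩ τ ⁻¹' C) = μ A * ν C := by
  have h𝓕 : ∀ f ∈ WLS U T μ, B1 f := fun f ⟨h, hh⟩ => hh.b2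
  have hA' : MeasurableSet A := SA_le h𝓕 A hA
  let g : SimpleFunc Y ℝ :=
    SimpleFunc.piecewise C hC (SimpleFunc.const Y 1) (SimpleFunc.const Y 0) -
      SimpleFunc.const Y (ν.real C)
  have hg : ∀ y, g y = C.indicator (fun _ => (1:ℝ)) y - ν.real C := by
    intro y
    by_cases hy : y ∈ C <;> simp [g, hy]
  have hg0 : ∫ y, g y ∂ν = 0 := by
    simp only [hg]
    rw [integral_sub ((BM.indicator hC).integrable ν) (integrable_const _), integral_indicator hC]
    simp
  have h1 := SA_orth (ρ := ρ) (Γ := fun z => g (τ z)) h𝓕 hπ.measurable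
    ((BM.simple g).comp hτ.measurable) (fun l hl => by
      have : ∃ hs, List.Forall₂ (WL U T μ) hs l := by
        clear hA hA' hg0 hg
        induction l with
        | nil => exact ⟨[], List.Forall₂.nil⟩
        | cons a l ih =>
          obtain ⟨hs, hhs⟩ := ih fun f hf => hl f (by simp [hf])
          obtain ⟨h, hh⟩ := hl a (by simp)
          exact ⟨h :: hs, List.Forall₂.cons hh hhs⟩
      obtain ⟨hs, hhs⟩ := this
      exact core hU hT hS hmix hR hπ hτ hcπ hcτ _ hs l rfl hhs g hg0) hA
  simp only [hg, mul_sub] at h1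
  have hA1 : BM (fun z => A.indicator (fun _ => (1:ℝ)) (π z)) :=
    (BM.indicator hA').comp hπ.measurable
  have hC1 : BM (fun z => C.indicator (fun _ => (1:ℝ)) (τ z)) :=
    (BM.indicator hC).comp hτ.measurable
  rw [integral_sub ((hA1.mul hC1).integrable ρ) ((hA1.mul (BM.const _)).integrable ρ),
    integral_mul_const, integral_comp_mp hπ (BM.indicator hA').1, integral_indicator hA'] at h1
  have e : ∀ z, A.indicator (fun _ => (1:ℝ)) (π z) * C.indicator (fun _ => (1:ℝ)) (τ z)
      = (π ⁻¹' A ∩ τ ⁻¹' C).indicator (fun _ => (1:ℝ)) z := by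
    intro z
    by_cases hx : π z ∈ A <;> by_cases hy : τ z ∈ C <;> simp [hx, hy, Set.indicator]
  simp only [e] at h1
  rw [integral_indicator ((hπ.measurable hA').inter (hτ.measurable hC))] at h1
  simp at h1
  have h2 : ρ.real (π ⁻¹' A ∩ τ ⁻¹' C) = μ.real A * ν.real C := by linarith
  simp only [Measure.real] at h2
  rw [← ENNReal.toReal_mul] at h2
  exact (ENNReal.toReal_eq_toReal_iff' (measure_ne_top _ _)
    (ENNReal.mul_ne_top (measure_ne_top _ _) (measure_ne_top _ _))).1 h2

end NMix

namespace NMix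

lemma WLS_comp {X : Type*} [MeasurableSpace X] {U : Ultrafilter ℕ} {T : X → X} {μ : Measure X}
    [IsProbabilityMeasure μ] (hTm : Measurable T) {Q Q' : X → X} (hQ : MeasurePreserving Q μ μ)
    (hQ' : MeasurePreserving Q' μ μ)
    (hQQ : ∀ x, Q (Q' x) = x) (hc : ∀ x, Q (T x) = T (Q x)) {F : X → ℝ} (hF : F ∈ WLS U T μ) :
    (fun x => F (Q x)) ∈ WLS U T μ := by
  obtain ⟨h, hh⟩ := hF
  have hcn : ∀ n x, Q (T^[n] x) = T^[n] (Q x) := by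
    intro n
    induction n with
    | zero => simp
    | succ n ih => intro x; rw [Function.iterate_succ_apply, Function.iterate_succ_apply, ih, hc]
  refine ⟨fun x => h (Q x), hh.b1.comp hQ.measurable, hh.b2.comp hQ.measurable, fun φ hφ => ?_⟩
  have hφ' : MemLp (fun x => φ (Q' x)) 2 μ := hφ.comp_measurePreserving hQ'
  have key : ∀ f : X → ℝ, Measurable f → ∫ x, f (Q x) * φ x ∂μ = ∫ x, f x * φ (Q' x) ∂μ := by
    intro f hf
    have hm : AEStronglyMeasurable (fun x => f (Q x) * φ x) (μ.map Q') := by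
      rw [hQ'.map_eq]
      exact (hf.comp hQ.measurable).aestronglyMeasurable.mul hφ.1
    have := integral_map hQ'.measurable.aemeasurable hm
    rw [hQ'.map_eq] at this
    rw [this]
    simp only [hQQ]
  rw [key F hh.b2.1]
  refine (hh.lim _ hφ').congr fun n => ?_
  simp only [hcn]
  rw [key (fun x => h (T^[n] x)) (hh.b1.1.comp (hTm.iterate n))]

lemma SA_measurable {X : Type*} [MeasurableSpace X] {𝓕 : Set (X → ℝ)} {Q : X → X}
    (h : ∀ F ∈ 𝓕, (fun x => F (Q x)) ∈ 𝓕) : Measurable[SA 𝓕, SA 𝓕] Q := by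
  refine @measurable_generateFrom _ _ (SA 𝓕) _ _ ?_
  rintro _ ⟨F, hF, c, rfl⟩
  exact MeasurableSpace.measurableSet_generateFrom ⟨_, h F hF, c, rfl⟩

lemma nontriv {X : Type*} [MeasurableSpace X] {T : X → X} {μ : Measure X}
    [IsProbabilityMeasure μ] (hT : MeasurePreserving T μ μ) (hnm : ¬ MeasureMixing T μ) :
    ∃ U : Ultrafilter ℕ, (U : Filter ℕ) ≤ atTop ∧
      ∃ A, MeasurableSet[SA (WLS U T μ)] A ∧ 0 < μ A ∧ μ A < 1 := by
  unfold MeasureMixing at hnm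
  push Not at hnm
  obtain ⟨A, B, hA, hB, hn⟩ := hnm
  rw [not_tendsto_iff_exists_frequently_notMem] at hn
  obtain ⟨s, hs, hfr⟩ := hn
  have hne : NeBot (atTop ⊓ 𝓟 {n | μ (A ∩ T^[n] ⁻¹' B) ∉ s}) := frequently_mem_iff_neBot.1 hfr
  let U := Ultrafilter.of (atTop ⊓ 𝓟 {n | μ (A ∩ T^[n] ⁻¹' B) ∉ s})
  have hUle : (U : Filter ℕ) ≤ atTop ⊓ 𝓟 {n | μ (A ∩ T^[n] ⁻¹' B) ∉ s} := Ultrafilter.of_le _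
  have hUs : ∀ᶠ n in U, μ (A ∩ T^[n] ⁻¹' B) ∉ s :=
    (hUle.trans inf_le_right) (mem_principal_self _)
  refine ⟨U, hUle.trans inf_le_left, ?_⟩
  by_contra hcon
  push Not at hcon
  obtain ⟨F, hF⟩ := exists_WL U (μ := μ) hT.measurable (B1.indicator hB)
  have hFi : Integrable F μ := hF.b2.bm.integrable μ
  -- `F` is constant
  have hconst : F =ᵐ[μ] fun _ => ∫ x, F x ∂μ := by
    set m := ∫ x, F x ∂μ with hm
    have hmm : ∫ _x, m ∂μ = m := by simp
    have hset : MeasurableSet[SA (WLS U T μ)] {x | m < F x} :=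
      MeasurableSpace.measurableSet_generateFrom ⟨F, ⟨_, hF⟩, m, rfl⟩
    have hset' : MeasurableSet {x | m < F x} := measurableSet_lt measurable_const hF.b2.1
    rcases eq_or_ne (μ {x | m < F x}) 0 with h0 | h0
    · have hle : F ≤ᵐ[μ] fun _ => m := by
        have : ∀ᵐ x ∂μ, ¬ m < F x := by rw [ae_iff]; simpa using h0
        filter_upwards [this] with x hx
        exact not_lt.1 hx
      exact (integral_eq_iff_of_ae_le hFi (integrable_const _) hle).1 (by rw [hmm])
    · have h1 : μ {x | m < F x} = 1 :=
        le_antisymm prob_le_one (hcon _ hset (pos_iff_ne_zero.2 h0))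
      have h2 : ∀ᵐ x ∂μ, m < F x := (prob_compl_eq_zero_iff hset').2 h1
      have hle : (fun _ => m) ≤ᵐ[μ] F := by
        filter_upwards [h2] with x hx
        exact hx.le
      exact ((integral_eq_iff_of_ae_le (integrable_const _) hFi hle).1 (by rw [hmm])).symm
  have hTn : ∀ n, MeasurePreserving (T^[n]) μ μ := fun n => hT.iterate n
  have hmean : ∫ x, F x ∂μ = μ.real B := by
    have h1 := hF.lim (fun _ => 1) ((BM.const 1).memLp μ 2)
    simp only [mul_one] at h1
    refine tendsto_nhds_unique h1 (tendsto_const_nhds.congr fun n => ?_)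
    rw [integral_comp_mp (hTn n) (BM.indicator hB).1, integral_indicator hB]
    simp
  have hlim := hF.lim _ ((BM.indicator hA).memLp μ 2)
  have e1 : ∫ x, F x * A.indicator (fun _ => (1:ℝ)) x ∂μ = (μ A * μ B).toReal := by
    have : ∫ x, F x * A.indicator (fun _ => (1:ℝ)) x ∂μ =
        ∫ x, μ.real B * A.indicator (fun _ => (1:ℝ)) x ∂μ := by
      refine integral_congr_ae ?_
      filter_upwards [hconst] with x hx
      rw [hx, hmean]
    rw [this, integral_const_mul, integral_indicator hA, ENNReal.toReal_mul]
    simp [Measure.real, mul_comm]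
  have e2 : ∀ n, ∫ x, B.indicator (fun _ => (1:ℝ)) (T^[n] x) * A.indicator (fun _ => (1:ℝ)) x ∂μ
      = (μ (A ∩ T^[n] ⁻¹' B)).toReal := by
    intro n
    have : ∀ x, B.indicator (fun _ => (1:ℝ)) (T^[n] x) * A.indicator (fun _ => (1:ℝ)) x
        = (A ∩ T^[n] ⁻¹' B).indicator (fun _ => (1:ℝ)) x := by
      intro x
      by_cases hx : x ∈ A <;> by_cases hx' : T^[n] x ∈ B <;> simp [hx, hx', Set.indicator]
    simp only [this]
    rw [integral_indicator (hA.inter ((hTn n).measurable hB))]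
    simp [Measure.real]
  rw [e1] at hlim
  simp only [e2] at hlim
  have hlim' := (ENNReal.tendsto_toReal_iff (fun n => measure_ne_top _ _)
    (ENNReal.mul_ne_top (measure_ne_top _ _) (measure_ne_top _ _))).1 hlim
  obtain ⟨n, h1, h2⟩ := (hUs.and (hlim'.eventually hs)).exists
  exact h1 h2

end NMix

namespace NMix
open ProbabilityTheory

theorem joining_general {X X' Y : Type*} [MeasurableSpace X] [StandardBorelSpace X]
    [MeasurableSpace X'] [MeasurableSpace Y] {U : Ultrafilter ℕ} (hU : (U : Filter ℕ) ≤ atTop)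
    {μ : Measure X} [IsProbabilityMeasure μ] {T : X → X} (hT : MeasurePreserving T μ μ)
    {π : X → X'} (hπ : Measurable π) {T' : X' → X'} {T'' : X' → X'} (hT' : Measurable T')
    (hT'' : Measurable T'') (hTT : ∀ x, T'' (T' x) = x) (hc : ∀ x, π (T x) = T' (π x))
    (hsub : ∀ A : Set X', MeasurableSet A → MeasurableSet[SA (WLS U T μ)] (π ⁻¹' A))
    {ν : Measure Y} [IsProbabilityMeasure ν] {S : Y → Y} (hS : MeasurePreserving S ν ν)
    (hmix : MeasureMixing S ν) {ρ : Measure (X' × Y)} [IsProbabilityMeasure ρ]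
    (hρ : ρ.map (Prod.map T' S) = ρ) (hρ1 : ρ.map Prod.fst = μ.map π) (hρ2 : ρ.map Prod.snd = ν) :
    ρ = (μ.map π).prod ν := by
  have : Nonempty X := nonempty_of_isProbabilityMeasure μ
  have : IsProbabilityMeasure (μ.map π) := Measure.isProbabilityMeasure_map hπ.aemeasurable
  set η := μ.map π with hη
  have hηT : MeasurePreserving T' η η := by
    refine ⟨hT', ?_⟩
    rw [hη, Measure.map_map hT' hπ]
    have : T' ∘ π = π ∘ T := by funext x; exact (hc x).symm
    rw [this, ← Measure.map_map hπ hT.measurable, hT.map_eq]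
  let κ : Kernel X' X := condDistrib (id : X → X) π μ
  have hκ0 : ∀ (A : Set X') (B : Set X), MeasurableSet A → MeasurableSet B →
      ∫⁻ x in A, κ x B ∂η = μ (π ⁻¹' A ∩ B) := by
    intro A B hA hB
    have h1 : η ⊗ₘ κ = μ.map fun a ↦ (π a, id a) :=
      compProd_map_condDistrib (X := π) (Y := (id : X → X)) (μ := μ) aemeasurable_id
    rw [← Measure.compProd_apply_prod hA hB, h1, Measure.map_apply (by fun_prop) (hA.prod hB)]
    rfl
  have hκm : ∀ B : Set X, MeasurableSet B → Measurable fun x => κ x B :=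
    fun B hB => Kernel.measurable_coe κ hB
  -- equivariance
  have hequi : ∀ B : Set X, MeasurableSet B →
      (fun x => κ x (T ⁻¹' B)) =ᵐ[η] fun x => κ (T' x) B := by
    intro B hB
    refine ae_eq_of_forall_setLIntegral_eq_of_sigmaFinite (hκm _ (hT.measurable hB))
      ((hκm B hB).comp hT') fun A hA _ => ?_
    rw [hκ0 A _ hA (hT.measurable hB)]
    have eA : A = T' ⁻¹' (T'' ⁻¹' A) := by
      ext x; simp [hTT]
    have h2 : ∫⁻ x in A, κ (T' x) B ∂η = ∫⁻ x in T'' ⁻¹' A, κ x B ∂η := by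
      conv_rhs => rw [← hηT.map_eq]
      rw [setLIntegral_map (hT'' hA) (hκm B hB) hT', ← eA]
    rw [h2, hκ0 _ B (hT'' hA) hB, ← hT.measure_preimage ((hπ (hT'' hA)).inter hB).nullMeasurableSet]
    congr 1
    ext x
    simp [hc, hTT]
  have hdet : ∀ A : Set X', MeasurableSet A →
      (fun x => κ x (π ⁻¹' A)) =ᵐ[η] A.indicator 1 := by
    intro A hA
    refine ae_eq_of_forall_setLIntegral_eq_of_sigmaFinite (hκm _ (hπ hA))
      (measurable_one.indicator hA) fun A' hA' _ => ?_
    rw [hκ0 A' _ hA' (hπ hA), lintegral_indicator_one hA, Measure.restrict_apply hA, hη,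
      Measure.map_apply hπ (hA.inter hA'), Set.preimage_inter, Set.inter_comm]
  have hfst : MeasurePreserving (Prod.fst : X' × Y → X') ρ η := ⟨measurable_fst, hρ1⟩
  let κ2 : Kernel (X' × Y) X := κ.comap Prod.fst measurable_fst
  let σ : Measure (X × Y) := (ρ ⊗ₘ κ2).map fun p => (p.2, p.1.2)
  have hσm : Measurable (fun p : (X' × Y) × X => (p.2, p.1.2)) := by fun_prop
  have hσp : IsProbabilityMeasure σ := Measure.isProbabilityMeasure_map hσm.aemeasurable
  have hσ : ∀ (B : Set X) (C : Set Y), MeasurableSet B → MeasurableSet C →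
      σ (B ×ˢ C) = ∫⁻ p in Prod.snd ⁻¹' C, κ p.1 B ∂ρ := by
    intro B C hB hC
    rw [Measure.map_apply hσm (hB.prod hC)]
    have : (fun p : (X' × Y) × X => (p.2, p.1.2)) ⁻¹' (B ×ˢ C) = (Prod.snd ⁻¹' C) ×ˢ B := by
      ext p; simp [and_comm]
    rw [this, Measure.compProd_apply_prod (measurable_snd hC) hB]
    rfl
  have hRm : Measurable (Prod.map T S) := hT.measurable.prodMap hS.measurable
  have hRm' : Measurable (Prod.map T' S) := hT'.prodMap hS.measurable
  have hσR : MeasurePreserving (Prod.map T S) σ σ := by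
    refine ⟨hRm, ?_⟩
    have : IsProbabilityMeasure (σ.map (Prod.map T S)) :=
      Measure.isProbabilityMeasure_map hRm.aemeasurable
    refine Measure.ext_prod fun {B C} hB hC => ?_
    rw [Measure.map_apply hRm (hB.prod hC)]
    have : Prod.map T S ⁻¹' (B ×ˢ C) = (T ⁻¹' B) ×ˢ (S ⁻¹' C) := by ext p; simp
    rw [this, hσ _ _ (hT.measurable hB) (hS.measurable hC), hσ _ _ hB hC]
    have h1 : ∫⁻ p in Prod.snd ⁻¹' C, κ p.1 B ∂ρ =
        ∫⁻ p in Prod.snd ⁻¹' (S ⁻¹' C), κ (T' p.1) B ∂ρ := by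
      conv_lhs => rw [← hρ]
      exact setLIntegral_map (measurable_snd hC) ((hκm B hB).comp measurable_fst) hRm'
    rw [h1]
    refine lintegral_congr_ae (ae_restrict_of_ae ?_)
    exact hfst.quasiMeasurePreserving.ae (hequi B hB)
  have hσ1 : MeasurePreserving Prod.fst σ μ := by
    refine ⟨measurable_fst, ?_⟩
    ext B hB
    rw [Measure.map_apply measurable_fst hB, ← Set.prod_univ, hσ _ _ hB .univ, Set.preimage_univ,
      setLIntegral_univ]
    have h1 : ∫⁻ p, κ p.1 B ∂ρ = ∫⁻ x, κ x B ∂η := hfst.lintegral_comp (hκm B hB)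
    rw [h1, ← setLIntegral_univ, hκ0 _ _ .univ hB]
    simp
  have hσ2 : MeasurePreserving Prod.snd σ ν := by
    refine ⟨measurable_snd, ?_⟩
    ext C hC
    rw [Measure.map_apply measurable_snd hC, ← Set.univ_prod, hσ _ _ .univ hC]
    simp [← hρ2, Measure.map_apply measurable_snd hC]
  refine (Measure.prod_eq fun A C hA hC => ?_).symm
  have h1 : σ ((π ⁻¹' A) ×ˢ C) = ρ (A ×ˢ C) := by
    rw [hσ _ _ (hπ hA) hC]
    have : ∫⁻ p in Prod.snd ⁻¹' C, κ p.1 (π ⁻¹' A) ∂ρ =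
        ∫⁻ p in Prod.snd ⁻¹' C, (Prod.fst ⁻¹' A).indicator 1 p ∂ρ := by
      refine lintegral_congr_ae (ae_restrict_of_ae ?_)
      filter_upwards [hfst.quasiMeasurePreserving.ae (hdet A hA)] with p hp
      rw [hp]; rfl
    rw [this, lintegral_indicator_one (measurable_fst hA), Measure.restrict_apply (measurable_fst hA)]
    rfl
  have h2 := indep_of_joining hU hT.measurable hS.measurable hmix hσR hσ1 hσ2
    (fun _ => rfl) (fun _ => rfl) (hsub A hA) hC
  rw [← h1, hη, Measure.map_apply hπ hA, ← h2]
  rfl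

end NMix

/-- Any non-mixing automorphism `T` of a standard Borel probability space `(X, μ)` has a
`T`-invariant sub-σ-algebra `𝓐`, nontrivial mod `μ`, such that for every mixing automorphism
`S` of a probability space `(Y, ν)`, every `(T × S)`-invariant probability measure on
`(X × Y, 𝓐 ⊗ 𝓒)` with marginals `μ|𝓐` and `ν` is the product measure. -/
theorem nonmixing_has_factor_disjoint_from_mixing
    {X : Type*} [mX : MeasurableSpace X] [StandardBorelSpace X]
    (μ : Measure X) [IsProbabilityMeasure μ]
    (T : X ≃ᵐ X) (hT : MeasurePreserving T μ μ)
    (hTnm : ¬ MeasureMixing (⇑T) μ) :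
    ∃ (𝓐 : MeasurableSpace X) (h𝓐 : 𝓐 ≤ mX),
      (∀ A : Set X, MeasurableSet[𝓐] A → MeasurableSet[𝓐] (⇑T ⁻¹' A)) ∧
      (∃ A : Set X, MeasurableSet[𝓐] A ∧ 0 < μ A ∧ μ A < 1) ∧
      (∀ (Y : Type*) (mY : MeasurableSpace Y) (ν : Measure Y),
        IsProbabilityMeasure ν →
        ∀ S : Y ≃ᵐ Y, MeasurePreserving S ν ν → MeasureMixing (⇑S) ν →
        ∀ ρ : @Measure (X × Y) (𝓐.prod mY), @IsProbabilityMeasure _ (𝓐.prod mY) ρ →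
          @Measure.map _ _ (𝓐.prod mY) (𝓐.prod mY) (Prod.map ⇑T ⇑S) ρ = ρ →
          @Measure.map _ _ (𝓐.prod mY) 𝓐 Prod.fst ρ = μ.trim h𝓐 →
          @Measure.map _ _ (𝓐.prod mY) mY Prod.snd ρ = ν →
          ρ = @Measure.prod _ _ 𝓐 mY (μ.trim h𝓐) ν) := by
  obtain ⟨U, hU, hA⟩ := NMix.nontriv hT hTnm
  have hTs : MeasurePreserving T.symm μ μ := hT.symm T
  have h𝓕 : ∀ f ∈ NMix.WLS U T μ, NMix.B1 f := fun f ⟨h, hh⟩ => hh.b2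
  have h𝓐 : NMix.SA (NMix.WLS U T μ) ≤ mX := NMix.SA_le h𝓕
  have hm : Measurable[NMix.SA (NMix.WLS U T μ), NMix.SA (NMix.WLS U T μ)] T :=
    NMix.SA_measurable fun F hF =>
      NMix.WLS_comp hT.measurable hT hTs (by simp) (fun _ => rfl) hF
  have hm' : Measurable[NMix.SA (NMix.WLS U T μ), NMix.SA (NMix.WLS U T μ)] T.symm :=
    NMix.SA_measurable fun F hF =>
      NMix.WLS_comp hT.measurable hTs hT (by simp) (by simp) hF
  refine ⟨NMix.SA (NMix.WLS U T μ), h𝓐, fun A hA => hm hA, hA, ?_⟩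
  intro Y mY ν hν S hS hmix ρ hρp hρ hρ1 hρ2
  have htrim : μ.trim h𝓐 = @Measure.map X X mX (NMix.SA (NMix.WLS U T μ)) id μ := by
    refine @Measure.ext _ (NMix.SA (NMix.WLS U T μ)) _ _ fun A hA => ?_
    rw [trim_measurableSet_eq h𝓐 hA, Measure.map_apply (measurable_id'' h𝓐) hA]
    rfl
  rw [htrim] at hρ1 ⊢
  exact @NMix.joining_general X X Y mX _ (NMix.SA (NMix.WLS U T μ)) mY U hU μ _ T hT id
    (measurable_id'' h𝓐) T T.symm hm hm' (by simp) (fun _ => rfl) (fun A hA => hA) ν hν S hS hmix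
    ρ hρp hρ hρ1 hρ2
end

section
/- Let T be a measure-preserving automorphism of a standard Borel probability space (X, 𝓑, μ), let (k_j) be a strictly increasing sequence of natural numbers, and suppose the Koopman powers U_T^{k_j} converge weakly to a bounded operator V on L²(μ). Let 𝓐 be the smallest sub-σ-algebra of 𝓑 (mod μ) with respect to which V f is measurable for every bounded measurable f : X → ℝ. Then for every probability space (Y, 𝓒, ν) and every mixing measure-preserving automorphism S of (Y, ν), every probability measure ρ on (X × Y, 𝓐 ⊗ 𝓒) that is invariant under T × S and has marginals μ restricted to 𝓐 and ν equals the product measure (μ|𝓐) ⊗ ν. -/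
open MeasureTheory Filter Topology

/-- The sub-σ-algebra generated by the images `V f` of (classes of) bounded measurable
functions `f` under the operator `V` on `L²(μ)`: the smallest σ-algebra making every such
`V f` measurable. -/
def generatedFactor {X : Type*} [MeasurableSpace X] (μ : Measure X)
    (V : Lp ℝ 2 μ →L[ℝ] Lp ℝ 2 μ) : MeasurableSpace X :=
  MeasurableSpace.generateFrom
    {s : Set X | ∃ f : Lp ℝ 2 μ,
      (∃ f₀ : X → ℝ, Measurable f₀ ∧ (∃ C : ℝ, ∀ x, |f₀ x| ≤ C) ∧ (f : X → ℝ) =ᵐ[μ] f₀) ∧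
      ∃ B : Set ℝ, MeasurableSet B ∧ s = ⇑(V f) ⁻¹' B}

lemma generatedFactor_le {X : Type*} [mX : MeasurableSpace X] (μ : Measure X)
    (V : Lp ℝ 2 μ →L[ℝ] Lp ℝ 2 μ) : generatedFactor μ V ≤ mX := by
  refine MeasurableSpace.generateFrom_le ?_
  rintro s ⟨f, -, B, hB, rfl⟩
  exact (Lp.stronglyMeasurable (V f)).measurable hB


open scoped BigOperators

/-- Bounded measurable real functions. -/
def Bd {α : Type*} [MeasurableSpace α] (f : α → ℝ) : Prop :=
  Measurable f ∧ ∃ C : ℝ, ∀ x, |f x| ≤ C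

namespace Bd

variable {α β : Type*} [MeasurableSpace α] [MeasurableSpace β] {f g : α → ℝ}

lemma mul (hf : Bd f) (hg : Bd g) : Bd (fun x => f x * g x) := by
  obtain ⟨hf, C, hC⟩ := hf
  obtain ⟨hg, D, hD⟩ := hg
  refine ⟨hf.mul hg, C * D, fun x => ?_⟩
  rw [abs_mul]
  exact mul_le_mul (hC x) (hD x) (abs_nonneg _) ((abs_nonneg _).trans (hC x))

lemma add (hf : Bd f) (hg : Bd g) : Bd (fun x => f x + g x) := by
  obtain ⟨hf, C, hC⟩ := hf
  obtain ⟨hg, D, hD⟩ := hg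
  exact ⟨hf.add hg, C + D, fun x => (abs_add_le _ _).trans (add_le_add (hC x) (hD x))⟩

lemma sub (hf : Bd f) (hg : Bd g) : Bd (fun x => f x - g x) := by
  obtain ⟨hf, C, hC⟩ := hf
  obtain ⟨hg, D, hD⟩ := hg
  exact ⟨hf.sub hg, C + D, fun x => (abs_sub _ _).trans (add_le_add (hC x) (hD x))⟩

lemma const (c : ℝ) : Bd (fun _ : α => c) := ⟨measurable_const, |c|, fun _ => le_rfl⟩

lemma comp (hf : Bd f) {t : β → α} (ht : Measurable t) : Bd (fun x => f (t x)) := by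
  obtain ⟨hf, C, hC⟩ := hf
  exact ⟨hf.comp ht, C, fun x => hC _⟩

lemma integrable (hf : Bd f) (μ : Measure α) [IsFiniteMeasure μ] : Integrable f μ := by
  obtain ⟨hf, C, hC⟩ := hf
  exact Integrable.of_bound hf.aestronglyMeasurable C (Eventually.of_forall hC)

lemma memLp (hf : Bd f) (μ : Measure α) [IsFiniteMeasure μ] (p : ENNReal) : MemLp f p μ := by
  obtain ⟨hf, C, hC⟩ := hf
  exact MemLp.of_bound hf.aestronglyMeasurable C (Eventually.of_forall hC)

lemma sum {ι : Type*} (s : Finset ι) {F : ι → α → ℝ} (h : ∀ i, Bd (F i)) :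
    Bd (fun x => ∑ i ∈ s, F i x) := by
  classical
  induction s using Finset.induction_on with
  | empty => simpa using const 0
  | insert a s ha ih => simpa [Finset.sum_insert ha] using (h a).add ih

lemma listProd {ι : Type*} (s : List ι) {F : ι → α → ℝ} (h : ∀ i ∈ s, Bd (F i)) :
    Bd (fun x => (s.map (fun i => F i x)).prod) := by
  induction s with
  | nil => simpa using const 1
  | cons a s ih =>
    simp only [List.map_cons, List.prod_cons]
    exact (h a (by simp)).mul (ih fun i hi => h i (by simp [hi]))

lemma indicator {s : Set α} (hs : MeasurableSet s) : Bd (s.indicator (fun _ => (1:ℝ))) := by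
  refine ⟨measurable_const.indicator hs, 1, fun x => ?_⟩
  by_cases h : x ∈ s <;> simp [h]

end Bd

section Core

variable {X Y : Type*} [MeasurableSpace X] [MeasurableSpace Y]

/-- Weakly positive semidefinite matrix-valued functions. -/
def Good {Z ι : Type*} [MeasurableSpace Z] [Fintype ι] (P : Measure Z) (H : ι → ι → Z → ℝ) : Prop :=
  ∀ φ : ι → Z → ℝ, (∀ k, Bd (φ k)) → 0 ≤ ∑ k, ∑ l, ∫ z, φ k z * φ l z * H k l z ∂P

/-- The convergence hypothesis. -/
def Conv (P : Measure (X × Y)) (a : ℕ → X → X) (W : (X → ℝ) → X → ℝ) : Prop :=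
  ∀ (f : X → ℝ) (Ψ : X × Y → ℝ), Bd f → Bd Ψ →
    Tendsto (fun j => ∫ z, f (a j z.1) * Ψ z ∂P) atTop (𝓝 (∫ z, W f z.1 * Ψ z ∂P))

variable {P : Measure (X × Y)} [IsFiniteMeasure P] {a : ℕ → X → X} {W : (X → ℝ) → X → ℝ}
  {ι : Type*} [Fintype ι]

lemma Good.mulV (hW : ∀ f, Bd f → Bd (W f)) (ha : ∀ j, Measurable (a j)) (hc : Conv P a W)
    {H : ι → ι → X × Y → ℝ} (hb : ∀ k l, Bd (H k l)) (hH : Good P H)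
    {f : ι → X → ℝ} (hf : ∀ k, Bd (f k)) :
    Good P (fun k l z => W (fun x => f k x * f l x) z.1 * H k l z) := by
  intro φ hφ
  have key : Tendsto (fun j => ∑ k, ∑ l, ∫ z, (f k (a j z.1) * f l (a j z.1)) *
      (φ k z * φ l z * H k l z) ∂P) atTop
      (𝓝 (∑ k, ∑ l, ∫ z, W (fun x => f k x * f l x) z.1 * (φ k z * φ l z * H k l z) ∂P)) := by
    refine tendsto_finsetSum _ fun k _ => tendsto_finsetSum _ fun l _ => ?_
    exact hc _ _ ((hf k).mul (hf l)) (((hφ k).mul (hφ l)).mul (hb k l))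
  refine (ge_of_tendsto key (Eventually.of_forall fun j => ?_)).trans (le_of_eq ?_)
  · refine (hH (fun k z => φ k z * f k (a j z.1)) fun k => (hφ k).mul
      ((hf k).comp ((ha j).comp measurable_fst))).trans (le_of_eq ?_)
    refine Finset.sum_congr rfl fun k _ => Finset.sum_congr rfl fun l _ => ?_
    congr 1; ext z; ring
  · refine Finset.sum_congr rfl fun k _ => Finset.sum_congr rfl fun l _ => ?_
    congr 1; ext z; ring

lemma Good.V_le (hW : ∀ f, Bd f → Bd (W f)) (ha : ∀ j, Measurable (a j)) (hc : Conv P a W)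
    {H : ι → ι → X × Y → ℝ} (hb : ∀ k l, Bd (H k l)) (hH : Good P H)
    {f : ι → X → ℝ} (hf : ∀ k, Bd (f k)) (φ : ι → X × Y → ℝ) (hφ : ∀ k, Bd (φ k)) :
    ∑ k, ∑ l, ∫ z, (φ k z * W (f k) z.1) * (φ l z * W (f l) z.1) * H k l z ∂P ≤
    ∑ k, ∑ l, ∫ z, φ k z * φ l z * (W (fun x => f k x * f l x) z.1 * H k l z) ∂P := by
  have hWf : ∀ k, Bd (fun z : X × Y => W (f k) z.1) := fun k => (hW _ (hf k)).comp measurable_fst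
  have hfa : ∀ j k, Bd (fun z : X × Y => f k (a j z.1)) := fun j k =>
    (hf k).comp ((ha j).comp measurable_fst)
  have hΨ : ∀ k l, Bd (fun z => φ k z * φ l z * H k l z) := fun k l =>
    ((hφ k).mul (hφ l)).mul (hb k l)
  have key : Tendsto (fun j => ∑ k, ∑ l,
      (∫ z, (f k (a j z.1) * f l (a j z.1)) * (φ k z * φ l z * H k l z) ∂P
      - ∫ z, f k (a j z.1) * (W (f l) z.1 * (φ k z * φ l z * H k l z)) ∂P
      - ∫ z, f l (a j z.1) * (W (f k) z.1 * (φ k z * φ l z * H k l z)) ∂P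
      + ∫ z, W (f k) z.1 * (W (f l) z.1 * (φ k z * φ l z * H k l z)) ∂P)) atTop
      (𝓝 (∑ k, ∑ l,
      (∫ z, W (fun x => f k x * f l x) z.1 * (φ k z * φ l z * H k l z) ∂P
      - ∫ z, W (f k) z.1 * (W (f l) z.1 * (φ k z * φ l z * H k l z)) ∂P
      - ∫ z, W (f l) z.1 * (W (f k) z.1 * (φ k z * φ l z * H k l z)) ∂P
      + ∫ z, W (f k) z.1 * (W (f l) z.1 * (φ k z * φ l z * H k l z)) ∂P))) := by
    refine tendsto_finsetSum _ fun k _ => tendsto_finsetSum _ fun l _ => ?_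
    refine ((Tendsto.sub ?_ ?_).sub ?_).add tendsto_const_nhds
    · exact hc _ _ ((hf k).mul (hf l)) (hΨ k l)
    · exact hc _ _ (hf k) ((hWf l).mul (hΨ k l))
    · exact hc _ _ (hf l) ((hWf k).mul (hΨ k l))
  have pos := ge_of_tendsto key (b := 0) (Eventually.of_forall fun j => ?_)
  · rw [← sub_nonneg, ← Finset.sum_sub_distrib]
    refine pos.trans (le_of_eq ?_)
    refine Finset.sum_congr rfl fun k _ => ?_
    rw [← Finset.sum_sub_distrib]
    refine Finset.sum_congr rfl fun l _ => ?_
    have e1 : ∫ z, W (f l) z.1 * (W (f k) z.1 * (φ k z * φ l z * H k l z)) ∂P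
        = ∫ z, W (f k) z.1 * (W (f l) z.1 * (φ k z * φ l z * H k l z)) ∂P := by
      congr 1; ext z; ring
    have e2 : ∫ z, (φ k z * W (f k) z.1) * (φ l z * W (f l) z.1) * H k l z ∂P
        = ∫ z, W (f k) z.1 * (W (f l) z.1 * (φ k z * φ l z * H k l z)) ∂P := by
      congr 1; ext z; ring
    have e3 : ∫ z, φ k z * φ l z * (W (fun x => f k x * f l x) z.1 * H k l z) ∂P
        = ∫ z, W (fun x => f k x * f l x) z.1 * (φ k z * φ l z * H k l z) ∂P := by
      congr 1; ext z; ring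
    rw [e1, e2, e3]; ring
  · refine (hH (fun k z => φ k z * (f k (a j z.1) - W (f k) z.1)) fun k => (hφ k).mul
      ((hfa j k).sub (hWf k))).trans (le_of_eq ?_)
    refine Finset.sum_congr rfl fun k _ => Finset.sum_congr rfl fun l _ => ?_
    rw [← integral_sub, ← integral_sub, ← integral_add]
    · congr 1; ext z; ring
    · exact Bd.integrable ((((hfa j k).mul (hfa j l)).mul (hΨ k l)).sub
        ((hfa j k).mul ((hWf l).mul (hΨ k l))) |>.sub
        ((hfa j l).mul ((hWf k).mul (hΨ k l)))) P
    · exact Bd.integrable ((hWf k).mul ((hWf l).mul (hΨ k l))) P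
    · exact Bd.integrable ((((hfa j k).mul (hfa j l)).mul (hΨ k l)).sub
        ((hfa j k).mul ((hWf l).mul (hΨ k l)))) P
    · exact Bd.integrable ((hfa j l).mul ((hWf k).mul (hΨ k l))) P
    · exact Bd.integrable (((hfa j k).mul (hfa j l)).mul (hΨ k l)) P
    · exact Bd.integrable ((hfa j k).mul ((hWf l).mul (hΨ k l))) P

/-- Iterated version. -/
lemma Good.list (hW : ∀ f, Bd f → Bd (W f)) (ha : ∀ j, Measurable (a j)) (hc : Conv P a W)
    {H : ι → ι → X × Y → ℝ} (hb : ∀ k l, Bd (H k l)) (hH : Good P H)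
    (fs : List (ι → X → ℝ)) (hf : ∀ f ∈ fs, ∀ k, Bd (f k)) :
    Good P (fun k l z => (fs.map (fun f => W (fun x => f k x * f l x) z.1)).prod * H k l z) ∧
    ∀ (φ : ι → X × Y → ℝ) (_ : ∀ k, Bd (φ k)),
    ∑ k, ∑ l, ∫ z, (φ k z * (fs.map (fun f => W (f k) z.1)).prod) *
        (φ l z * (fs.map (fun f => W (f l) z.1)).prod) * H k l z ∂P ≤
    ∑ k, ∑ l, ∫ z, φ k z * φ l z *
      ((fs.map (fun f => W (fun x => f k x * f l x) z.1)).prod * H k l z) ∂P := by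
  induction fs with
  | nil => simpa using hH
  | cons f fs ih =>
    obtain ⟨ih1, ih2⟩ := ih fun g hg => hf g (by simp [hg])
    have hf0 : ∀ k, Bd (f k) := hf f (by simp)
    have hb' : ∀ k l, Bd (fun z : X × Y =>
        (fs.map (fun f => W (fun x => f k x * f l x) z.1)).prod * H k l z) := fun k l =>
      (Bd.listProd fs fun g hg => (hW _ ((hf g (by simp [hg]) k).mul
        (hf g (by simp [hg]) l))).comp measurable_fst).mul (hb k l)
    refine ⟨?_, fun φ hφ => ?_⟩
    · have := ih1.mulV hW ha hc hb' hf0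
      simpa only [List.map_cons, List.prod_cons, mul_assoc] using this
    · have h1 := ih2 (fun k z => φ k z * W (f k) z.1) fun k =>
        (hφ k).mul ((hW _ (hf0 k)).comp measurable_fst)
      have h2 := ih1.V_le hW ha hc hb' hf0 φ hφ
      simp only [List.map_cons, List.prod_cons]
      simp only [mul_assoc] at h1 h2 ⊢
      exact h1.trans h2

end Core

section Core2

lemma cs_bd {Z : Type*} [MeasurableSpace Z] (P : Measure Z) [IsFiniteMeasure P] {f u : Z → ℝ}
    (hf : Bd f) (hu : Bd u) :
    (∫ z, f z * u z ∂P) ^ 2 ≤ (∫ z, f z * f z ∂P) * ∫ z, u z * u z ∂P := by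
  have h : ∀ t : ℝ, 0 ≤ (∫ z, f z * f z ∂P) * (t * t) + (-2 * ∫ z, f z * u z ∂P) * t
      + ∫ z, u z * u z ∂P := by
    intro t
    have h0 : 0 ≤ ∫ z, (t * f z - u z) * (t * f z - u z) ∂P :=
      integral_nonneg fun z => mul_self_nonneg _
    have e : ∫ z, (t * f z - u z) * (t * f z - u z) ∂P
        = (∫ z, f z * f z ∂P) * (t * t) + (-2 * ∫ z, f z * u z ∂P) * t
      + ∫ z, u z * u z ∂P := by
      have : ∀ z, (t * f z - u z) * (t * f z - u z)
          = (t * t) * (f z * f z) + (-2 * t) * (f z * u z) + u z * u z := fun z => by ring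
      simp_rw [this]
      rw [integral_add, integral_add, integral_const_mul, integral_const_mul]
      · ring
      · exact ((hf.mul hf).integrable P).const_mul _
      · exact ((hf.mul hu).integrable P).const_mul _
      · exact (((hf.mul hf).integrable P).const_mul _).add (((hf.mul hu).integrable P).const_mul _)
      · exact (hu.mul hu).integrable P
    rwa [e] at h0
  have := discrim_le_zero h
  unfold discrim at this
  nlinarith

lemma mp_integral {Z Z' : Type*} [MeasurableSpace Z] [MeasurableSpace Z'] {P : Measure Z}
    {Q : Measure Z'} {t : Z → Z'} (ht : MeasurePreserving t P Q) {F : Z' → ℝ} (hF : Measurable F) :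
    ∫ z, F (t z) ∂P = ∫ z, F z ∂Q := by
  rw [← ht.map_eq, integral_map ht.measurable.aemeasurable hF.aestronglyMeasurable]

variable {X Y : Type*} [MeasurableSpace X] [MeasurableSpace Y]

lemma symm_iter_iter (S : Y ≃ᵐ Y) (m : ℕ) (y : Y) : (⇑S.symm)^[m] ((⇑S)^[m] y) = y :=
  (Function.LeftInverse.iterate S.symm_apply_apply m) y

lemma gamma_small {ν : Measure Y} [IsProbabilityMeasure ν] (S : Y ≃ᵐ Y)
    (hS : MeasurePreserving S ν ν) (hmix : MeasureMixing (⇑S) ν) {C : Set Y}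
    (hC : MeasurableSet C) (ε : ℝ) (hε : 0 < ε) :
    ∃ M : ℕ, ∀ m l : ℕ, m + M ≤ l →
      |∫ y, (C.indicator (fun _ => (1:ℝ)) ((⇑S.symm)^[m] y) - ν.real C) *
        (C.indicator (fun _ => (1:ℝ)) ((⇑S.symm)^[l] y) - ν.real C) ∂ν| ≤ ε := by
  have h1 := hmix C C hC hC
  have h2 : Tendsto (fun n => ν.real (C ∩ (⇑S)^[n] ⁻¹' C)) atTop (𝓝 (ν.real C * ν.real C)) := by
    have := (ENNReal.tendsto_toReal (ENNReal.mul_ne_top (measure_ne_top ν C)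
      (measure_ne_top ν C))).comp h1
    simpa [Measure.real, Function.comp_def] using this
  obtain ⟨M, hM⟩ := (Metric.tendsto_atTop.1 h2) ε hε
  refine ⟨M, fun m l hml => ?_⟩
  have hg : Bd (C.indicator (fun _ => (1:ℝ))) := Bd.indicator hC
  have hg' : Bd (fun y => C.indicator (fun _ => (1:ℝ)) y - ν.real C) := hg.sub (Bd.const _)
  have hSm : ∀ m : ℕ, Measurable ((⇑S.symm)^[m]) := fun m => S.symm.measurable.iterate m
  have e1 := mp_integral (hS.iterate l) (F := fun y =>
    (C.indicator (fun _ => (1:ℝ)) ((⇑S.symm)^[m] y) - ν.real C) *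
        (C.indicator (fun _ => (1:ℝ)) ((⇑S.symm)^[l] y) - ν.real C))
        ((hg'.comp (hSm m)).mul (hg'.comp (hSm l))).1
  rw [← e1]
  obtain ⟨d, rfl⟩ : ∃ d, l = m + d := ⟨l - m, by omega⟩
  have hd : M ≤ d := by omega
  have e2 : ∀ y, (⇑S.symm)^[m] ((⇑S)^[m + d] y) = (⇑S)^[d] y := by
    intro y
    rw [Function.iterate_add_apply, symm_iter_iter]
  simp_rw [e2, symm_iter_iter]
  have hSd : Measurable ((⇑S)^[d]) := S.measurable.iterate d
  have e3 : ∀ y, (C.indicator (fun _ => (1:ℝ)) ((⇑S)^[d] y) - ν.real C) *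
        (C.indicator (fun _ => (1:ℝ)) y - ν.real C)
      = (C ∩ (⇑S)^[d] ⁻¹' C).indicator (fun _ => (1:ℝ)) y
        - ν.real C * C.indicator (fun _ => (1:ℝ)) ((⇑S)^[d] y)
        - ν.real C * C.indicator (fun _ => (1:ℝ)) y + ν.real C * ν.real C := by
    intro y
    have : (C ∩ (⇑S)^[d] ⁻¹' C).indicator (fun _ => (1:ℝ)) y
      = C.indicator (fun _ => (1:ℝ)) y * C.indicator (fun _ => (1:ℝ)) ((⇑S)^[d] y) := by
      by_cases h : y ∈ C <;> by_cases h' : (⇑S)^[d] y ∈ C <;> simp [h, h']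
    rw [this]; ring
  simp_rw [e3]
  have hI : Bd ((C ∩ (⇑S)^[d] ⁻¹' C).indicator (fun _ => (1:ℝ))) :=
    Bd.indicator (hC.inter (hSd hC))
  have hgd : Bd (fun y => ν.real C * C.indicator (fun _ => (1:ℝ)) ((⇑S)^[d] y)) :=
    (Bd.const _).mul (hg.comp hSd)
  have hg0 : Bd (fun y => ν.real C * C.indicator (fun _ => (1:ℝ)) y) := (Bd.const _).mul hg
  rw [integral_add (((hI.sub hgd).sub hg0).integrable ν) (integrable_const _),
    integral_sub ((hI.sub hgd).integrable ν) (hg0.integrable ν),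
    integral_sub (hI.integrable ν) (hgd.integrable ν), integral_const_mul, integral_const_mul,
    mp_integral (hS.iterate d) hg.1, integral_indicator_const _ hC,
    integral_indicator_const _ (hC.inter (hSd hC))]
  have := hM d hd
  rw [Real.dist_eq] at this
  simp only [smul_eq_mul, mul_one, integral_const, probReal_univ, one_mul]
  refine le_of_eq_of_le ?_ this.le
  congr 1; ring

variable {W : (X → ℝ) → X → ℝ}

lemma exists_bound_list (hW : ∀ f, Bd f → Bd (W f))
    (hWb : ∀ f C, Bd f → (∀ x, |f x| ≤ C) → ∀ x, |W f x| ≤ C)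
    (fs : List (X → ℝ)) (hfs : ∀ f ∈ fs, Bd f) :
    ∃ K : ℝ, 0 ≤ K ∧ ∀ s t : X → X, Measurable s → Measurable t → ∀ x,
      |(fs.map (fun f => W (fun x => f (s x) * f (t x)) x)).prod| ≤ K := by
  induction fs with
  | nil => exact ⟨1, by norm_num, by simp⟩
  | cons f fs ih =>
    obtain ⟨K, hK0, hK⟩ := ih fun g hg => hfs g (by simp [hg])
    obtain ⟨hf, C, hC⟩ := hfs f (by simp)
    have hf' : Bd f := ⟨hf, C, hC⟩
    refine ⟨C * C * K, mul_nonneg (mul_self_nonneg _) hK0, fun s t hs ht x => ?_⟩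
    simp only [List.map_cons, List.prod_cons, abs_mul]
    refine mul_le_mul ?_ (hK s t hs ht x) (abs_nonneg _) (mul_self_nonneg _)
    refine hWb _ _ ((hf'.comp hs).mul (hf'.comp ht)) (fun x => ?_) x
    rw [abs_mul]
    exact mul_le_mul (hC _) (hC _) (abs_nonneg _) ((abs_nonneg _).trans (hC x))

lemma W_iter {μ : Measure X} (T : X ≃ᵐ X) (hT : MeasurePreserving T μ μ)
    (hWT : ∀ f, Bd f → W (fun x => f (T.symm x)) =ᵐ[μ] fun x => W f (T.symm x))
    (m : ℕ) (f : X → ℝ) (hf : Bd f) :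
    W (fun x => f ((⇑T.symm)^[m] x)) =ᵐ[μ] fun x => W f ((⇑T.symm)^[m] x) := by
  induction m with
  | zero => simp
  | succ m ih =>
    have h1 := hWT (fun x => f ((⇑T.symm)^[m] x)) (hf.comp (T.symm.measurable.iterate m))
    have h2 := hT.symm.quasiMeasurePreserving.ae_eq_comp ih
    simp only [Function.iterate_succ_apply]
    filter_upwards [h1, h2] with x hx hx'
    simp only [Function.comp_apply] at hx'
    rw [hx, hx']

lemma W_iter_list {μ : Measure X} (T : X ≃ᵐ X) (hT : MeasurePreserving T μ μ)
    (hWT : ∀ f, Bd f → W (fun x => f (T.symm x)) =ᵐ[μ] fun x => W f (T.symm x))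
    (m : ℕ) (fs : List (X → ℝ)) (hfs : ∀ f ∈ fs, Bd f) :
    (fun x => (fs.map (fun f => W (fun x => f ((⇑T.symm)^[m] x)) x)).prod)
      =ᵐ[μ] fun x => (fs.map (fun f => W f ((⇑T.symm)^[m] x))).prod := by
  induction fs with
  | nil => simp
  | cons f fs ih =>
    filter_upwards [ih fun g hg => hfs g (by simp [hg]),
      W_iter T hT hWT m f (hfs f (by simp))] with x hx hx'
    simp only [List.map_cons, List.prod_cons, hx, hx']

lemma good_one {Z ι : Type*} [MeasurableSpace Z] [Fintype ι] (P : Measure Z) [IsFiniteMeasure P] :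
    Good (ι := ι) P (fun _ _ _ => 1) := by
  intro φ hφ
  have : ∑ k, ∑ l, ∫ z, φ k z * φ l z * 1 ∂P = ∫ z, (∑ k, φ k z) * (∑ k, φ k z) ∂P := by
    simp_rw [Finset.sum_mul_sum]
    rw [integral_finsetSum]
    · refine Finset.sum_congr rfl fun k _ => ?_
      rw [integral_finsetSum]
      · simp
      · exact fun l _ => ((hφ k).mul (hφ l)).integrable P
    · exact fun k _ => (Bd.sum _ fun l => (hφ k).mul (hφ l)).integrable P
  rw [this]
  exact integral_nonneg fun z => mul_self_nonneg _

lemma sq_sum {Z ι : Type*} [MeasurableSpace Z] [Fintype ι] (P : Measure Z) [IsFiniteMeasure P]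
    (φ : ι → Z → ℝ) (hφ : ∀ k, Bd (φ k)) :
    ∫ z, (∑ k, φ k z) * (∑ k, φ k z) ∂P = ∑ k, ∑ l, ∫ z, φ k z * φ l z * 1 ∂P := by
  simp_rw [Finset.sum_mul_sum]
  rw [integral_finsetSum]
  · refine Finset.sum_congr rfl fun k _ => ?_
    rw [integral_finsetSum]
    · simp
    · exact fun l _ => ((hφ k).mul (hφ l)).integrable P
  · exact fun k _ => (Bd.sum _ fun l => (hφ k).mul (hφ l)).integrable P

end Core2

section Core3

variable {X Y : Type*} [MeasurableSpace X] [MeasurableSpace Y] {W : (X → ℝ) → X → ℝ}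

lemma indicator_ext {μ : Measure X} {ν : Measure Y} [IsProbabilityMeasure ν]
    {P : Measure (X × Y)} [IsProbabilityMeasure P] {Φ : X → ℝ} (hΦ : Bd Φ)
    (h : ∀ C : Set Y, MeasurableSet C →
      ∫ z, Φ z.1 * C.indicator (fun _ => (1:ℝ)) z.2 ∂P = (∫ x, Φ x ∂μ) * ν.real C)
    {C D : Set Y} (hC : MeasurableSet C) (hD : MeasurableSet D) (c : ℝ) :
    ∫ z, Φ z.1 * ((C.indicator (fun _ => (1:ℝ)) z.2 - c) *
        (D.indicator (fun _ => (1:ℝ)) z.2 - c)) ∂P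
      = (∫ x, Φ x ∂μ) * ∫ y, (C.indicator (fun _ => (1:ℝ)) y - c) *
        (D.indicator (fun _ => (1:ℝ)) y - c) ∂ν := by
  have e : ∀ y, (C.indicator (fun _ => (1:ℝ)) y - c) * (D.indicator (fun _ => (1:ℝ)) y - c)
      = (C ∩ D).indicator (fun _ => (1:ℝ)) y - c * C.indicator (fun _ => (1:ℝ)) y
        - c * D.indicator (fun _ => (1:ℝ)) y + c * c * Set.univ.indicator (fun _ => (1:ℝ)) y := by
    intro y
    by_cases h : y ∈ C <;> by_cases h' : y ∈ D <;> simp [h, h'] <;> ring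
  have b : ∀ s : Set Y, MeasurableSet s → Bd (s.indicator (fun _ => (1:ℝ))) :=
    fun s hs => Bd.indicator hs
  have bΦ : ∀ s : Set Y, MeasurableSet s →
      Bd (fun z : X × Y => Φ z.1 * s.indicator (fun _ => (1:ℝ)) z.2) :=
    fun s hs => (hΦ.comp measurable_fst).mul ((b s hs).comp measurable_snd)
  simp_rw [e]
  have e2 : ∀ z : X × Y, Φ z.1 * ((C ∩ D).indicator (fun _ => (1:ℝ)) z.2
        - c * C.indicator (fun _ => (1:ℝ)) z.2
        - c * D.indicator (fun _ => (1:ℝ)) z.2 + c * c * Set.univ.indicator (fun _ => (1:ℝ)) z.2)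
      = Φ z.1 * (C ∩ D).indicator (fun _ => (1:ℝ)) z.2
        - c * (Φ z.1 * C.indicator (fun _ => (1:ℝ)) z.2)
        - c * (Φ z.1 * D.indicator (fun _ => (1:ℝ)) z.2)
        + c * c * (Φ z.1 * Set.univ.indicator (fun _ => (1:ℝ)) z.2) := fun z => by ring
  simp_rw [e2]
  have a1 := bΦ _ (hC.inter hD)
  have a2 := (Bd.const c).mul (bΦ _ hC)
  have a3 := (Bd.const c).mul (bΦ _ hD)
  have a4 := (Bd.const (c * c)).mul (bΦ _ MeasurableSet.univ)
  have b1 := b _ (hC.inter hD)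
  have b2 := (Bd.const c).mul (b _ hC)
  have b3 := (Bd.const c).mul (b _ hD)
  have b4 := (Bd.const (c * c)).mul (b _ MeasurableSet.univ)
  rw [integral_add (((a1.sub a2).sub a3).integrable P) (a4.integrable P),
    integral_sub ((a1.sub a2).integrable P) (a3.integrable P),
    integral_sub (a1.integrable P) (a2.integrable P),
    integral_add (((b1.sub b2).sub b3).integrable ν) (b4.integrable ν),
    integral_sub ((b1.sub b2).integrable ν) (b3.integrable ν),
    integral_sub (b1.integrable ν) (b2.integrable ν)]
  simp_rw [integral_const_mul]
  rw [h _ hC, h _ hD, h _ (hC.inter hD), h _ MeasurableSet.univ, integral_indicator_const _ hC,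
    integral_indicator_const _ hD, integral_indicator_const _ (hC.inter hD),
    integral_indicator_const _ MeasurableSet.univ]
  simp only [smul_eq_mul, mul_one]
  ring

theorem core {μ : Measure X} [IsProbabilityMeasure μ] {ν : Measure Y} [IsProbabilityMeasure ν]
    {P : Measure (X × Y)} [IsProbabilityMeasure P]
    (hfst : MeasurePreserving Prod.fst P μ) (hsnd : MeasurePreserving Prod.snd P ν)
    (T : X ≃ᵐ X) (hT : MeasurePreserving T μ μ) (S : Y ≃ᵐ Y) (hS : MeasurePreserving S ν ν)
    (hmix : MeasureMixing (⇑S) ν) (hP : MeasurePreserving (Prod.map T S) P P)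
    (k : ℕ → ℕ) (hk : StrictMono k)
    (hW : ∀ f, Bd f → Bd (W f))
    (hWb : ∀ f C, Bd f → (∀ x, |f x| ≤ C) → ∀ x, |W f x| ≤ C)
    (hc : Conv P (fun j => (⇑T)^[k j]) W)
    (hWT : ∀ f, Bd f → W (fun x => f (T.symm x)) =ᵐ[μ] fun x => W f (T.symm x)) (n : ℕ) :
    ∀ fs : List (X → ℝ), fs.length = n → (∀ f ∈ fs, Bd f) → ∀ C : Set Y, MeasurableSet C →
      ∫ z, (fs.map (fun f => W f z.1)).prod * C.indicator (fun _ => (1:ℝ)) z.2 ∂P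
        = (∫ x, (fs.map (fun f => W f x)).prod ∂μ) * ν.real C := by
  induction n with
  | zero =>
    intro fs hl _ C hC
    obtain rfl := List.length_eq_zero_iff.1 hl
    simp only [List.map_nil, List.prod_nil, one_mul, integral_const, probReal_univ, smul_eq_mul,
      mul_one]
    rw [mp_integral hsnd (Bd.indicator hC).1, integral_indicator_const _ hC]
    simp
  | succ n ih =>
    intro fs hl hfs C hC
    obtain ⟨f, fs, rfl⟩ : ∃ f fs', fs = f :: fs' := by
      cases fs with
      | nil => simp at hl
      | cons f fs => exact ⟨f, fs, rfl⟩
    have hl' : fs.length = n := by simpa using hl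
    have hf : Bd f := hfs f (by simp)
    have hfs' : ∀ f ∈ fs, Bd f := fun g hg => hfs g (by simp [hg])
    simp only [List.map_cons, List.prod_cons]
    set c := ν.real C with hcdef
    set g : Y → ℝ := fun y => C.indicator (fun _ => (1:ℝ)) y - c with hgdef
    set Φ : X → ℝ := fun x => (fs.map (fun f => W f x)).prod with hΦdef
    have hΦ : Bd Φ := Bd.listProd fs fun f hf => hW f (hfs' f hf)
    have hg : Bd g := (Bd.indicator hC).sub (Bd.const c)
    have hWf := hW f hf
    have hWΦ : Bd (fun x => W f x * Φ x) := hWf.mul hΦ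
    have hSm : ∀ m : ℕ, Measurable ((⇑S.symm)^[m]) := fun m => S.symm.measurable.iterate m
    have hTm : ∀ m : ℕ, Measurable ((⇑T.symm)^[m]) := fun m => T.symm.measurable.iterate m
    -- the limit
    set L := ∫ z, W f z.1 * (Φ z.1 * g z.2) ∂P with hL
    suffices hL0 : L = 0 by
      have : ∀ z : X × Y, W f z.1 * Φ z.1 * C.indicator (fun _ => (1:ℝ)) z.2
          = W f z.1 * (Φ z.1 * g z.2) + (W f z.1 * Φ z.1) * c := fun z => by
        simp only [hgdef]; ring
      change ∫ z, W f z.1 * Φ z.1 * C.indicator (fun _ => (1:ℝ)) z.2 ∂P = _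
      simp_rw [this]
      rw [integral_add, integral_mul_const, mp_integral hfst (F := fun x => W f x * Φ x) hWΦ.1,
        ← hL, hL0, zero_add]
      · exact ((hWf.comp measurable_fst).mul ((hΦ.comp measurable_fst).mul
          (hg.comp measurable_snd))).integrable P
      · exact ((hWΦ.comp measurable_fst).mul (Bd.const c)).integrable P
    set A : ℕ → ℝ := fun j => ∫ z, f ((⇑T)^[k j] z.1) * (Φ z.1 * g z.2) ∂P with hA
    have hAL : Tendsto A atTop (𝓝 L) := hc f (fun z => Φ z.1 * g z.2) hf
      ((hΦ.comp measurable_fst).mul (hg.comp measurable_snd))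
    -- the vectors
    set v : ℕ → X × Y → ℝ := fun m z =>
      g ((⇑S.symm)^[m] z.2) * (fs.map (fun f => W (fun x => f ((⇑T.symm)^[m] x)) z.1)).prod with hv
    have hvb : ∀ m, Bd (v m) := fun m => (hg.comp ((hSm m).comp measurable_snd)).mul
      (Bd.listProd fs fun f hf => (hW _ ((hfs' f hf).comp (hTm m))).comp measurable_fst)
    have hAv : ∀ j, A j = ∫ z, f z.1 * v (k j) z ∂P := by
      intro j
      have e1 := mp_integral (hP.iterate (k j)) (F := fun z : X × Y =>
        f z.1 * (Φ ((⇑T.symm)^[k j] z.1) * g ((⇑S.symm)^[k j] z.2)))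
        ((hf.comp measurable_fst).mul ((hΦ.comp ((hTm _).comp measurable_fst)).mul
          (hg.comp ((hSm _).comp measurable_snd)))).1
      have e2 : ∀ z : X × Y, (Prod.map T S)^[k j] z = ((⇑T)^[k j] z.1, (⇑S)^[k j] z.2) := by
        intro z; rw [Prod.map_iterate]; rfl
      simp_rw [e2, symm_iter_iter] at e1
      rw [hA]
      refine e1.trans (integral_congr_ae ?_)
      have := hfst.quasiMeasurePreserving.ae_eq_comp (W_iter_list T hT hWT (k j) fs hfs')
      filter_upwards [this] with z hz
      simp only [Function.comp_apply] at hz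
      simp only [hv, hz, hΦdef]
      ring
    obtain ⟨K, hK0, hK⟩ := exists_bound_list hW hWb fs hfs'
    set F := ∫ z, f z.1 * f z.1 ∂P with hF
    have hF0 : 0 ≤ F := integral_nonneg fun z => mul_self_nonneg _
    -- main estimate
    have main : ∀ ε : ℝ, 0 < ε → L ^ 2 ≤ F * (K * ε) := by
      intro ε hε
      obtain ⟨M, hM⟩ := gamma_small S hS hmix hC ε hε
      have hAM : Tendsto (fun i => A (M * i + i)) atTop (𝓝 L) := by
        refine hAL.comp (tendsto_atTop_mono (fun i => ?_) tendsto_id)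
        exact Nat.le_add_left i (M * i)
      have hces := hAM.cesaro
      have hlim : Tendsto (fun N : ℕ => ((N : ℝ)⁻¹ * ∑ i ∈ Finset.range N, A (M * i + i)) ^ 2)
        atTop (𝓝 (L ^ 2)) := hces.pow 2
      have hlim2 : Tendsto (fun N : ℕ => F * (K * ((N : ℝ)⁻¹ + ε))) atTop
          (𝓝 (F * (K * (0 + ε)))) :=
        ((tendsto_inv_atTop_nhds_zero_nat.add_const ε).const_mul K).const_mul F
      rw [zero_add] at hlim2
      refine le_of_tendsto_of_tendsto hlim hlim2 ?_
      filter_upwards [eventually_gt_atTop 0] with N hN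
      set q : Fin N → ℕ := fun i => k (M * i + i) with hq
      have hsum : ∑ i ∈ Finset.range N, A (M * i + i) = ∫ z, f z.1 * ∑ i, v (q i) z ∂P := by
        rw [← Fin.sum_univ_eq_sum_range (fun i => A (M * i + i))]
        simp_rw [Finset.mul_sum]
        rw [integral_finsetSum]
        · exact Finset.sum_congr rfl fun i _ => hAv _
        · exact fun i _ => ((hf.comp measurable_fst).mul (hvb _)).integrable P
      have hcs := cs_bd P (hf.comp measurable_fst) (Bd.sum Finset.univ fun i : Fin N => hvb (q i))
      rw [sq_sum P _ fun i => hvb (q i)] at hcs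
      have hG := (Good.list (ι := Fin N) hW (fun j => T.measurable.iterate (k j)) hc
        (H := fun _ _ _ => 1) (fun _ _ => Bd.const 1)
        (good_one P) (fs.map (fun f => fun i x => f ((⇑T.symm)^[q i] x)))
        (by
          intro h hh i
          obtain ⟨f, hf, rfl⟩ := List.mem_map.1 hh
          exact (hfs' f hf).comp (hTm _))).2 (fun i z => g ((⇑S.symm)^[q i] z.2))
          (fun i => hg.comp ((hSm _).comp measurable_snd))
      simp only [List.map_map, Function.comp_def, mul_one] at hG
      simp only [hv, mul_one] at hcs
      have hterm : ∀ i l : Fin N, ∫ z, g ((⇑S.symm)^[q i] z.2) * g ((⇑S.symm)^[q l] z.2) *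
          (fs.map (fun f => W (fun x => f ((⇑T.symm)^[q i] x) * f ((⇑T.symm)^[q l] x)) z.1)).prod ∂P
          ≤ if i = l then K else K * ε := by
        intro i l
        set Θ : X → ℝ := fun x =>
          (fs.map (fun f => W (fun x => f ((⇑T.symm)^[q i] x) * f ((⇑T.symm)^[q l] x)) x)).prod
          with hΘdef
        have hΘ : Bd Θ := Bd.listProd fs fun f hf =>
          hW _ (((hfs' f hf).comp (hTm _)).mul ((hfs' f hf).comp (hTm _)))
        have hih := ih (fs.map (fun f => fun x => f ((⇑T.symm)^[q i] x) * f ((⇑T.symm)^[q l] x)))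
          (by simpa using hl') (by
            intro h hh
            obtain ⟨f, hf, rfl⟩ := List.mem_map.1 hh
            exact ((hfs' f hf).comp (hTm _)).mul ((hfs' f hf).comp (hTm _)))
        simp only [List.map_map, Function.comp_def] at hih
        have hext := indicator_ext hΘ hih (hSm (q i) hC) (hSm (q l) hC) c
        have heq : ∫ z, g ((⇑S.symm)^[q i] z.2) * g ((⇑S.symm)^[q l] z.2) * Θ z.1 ∂P
            = (∫ x, Θ x ∂μ) * ∫ y, g ((⇑S.symm)^[q i] y) * g ((⇑S.symm)^[q l] y) ∂ν := by
          have hpre : ∀ (m : ℕ) (y : Y), ((⇑S.symm)^[m] ⁻¹' C).indicator (fun _ => (1:ℝ)) y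
              = C.indicator (fun _ => (1:ℝ)) ((⇑S.symm)^[m] y) := fun m y => rfl
          simp only [hpre] at hext
          refine Eq.trans ?_ hext
          congr 1; ext z
          simp only [hgdef]
          ring
        have hΘK : |∫ x, Θ x ∂μ| ≤ K := by
          have := norm_integral_le_of_norm_le_const (μ := μ) (f := Θ) (C := K)
            (Eventually.of_forall fun x => hK _ _ (hTm _) (hTm _) x)
          simpa using this
        change ∫ z, g ((⇑S.symm)^[q i] z.2) * g ((⇑S.symm)^[q l] z.2) * Θ z.1 ∂P ≤ _
        rw [heq]
        refine (le_abs_self _).trans ?_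
        rw [abs_mul]
        have hmono : ∀ a b : Fin N, a < b → q a + M ≤ q b := by
          intro a b hab
          have h1 : (M * (a:ℕ) + a) + M ≤ M * (b:ℕ) + b := by
            have : (a:ℕ) + 1 ≤ b := hab
            nlinarith
          have h2 : ∀ p r : ℕ, k p + r ≤ k (p + r) := by
            intro p r
            induction r with
            | zero => simp
            | succ r ihr =>
              have := hk (Nat.lt_succ_self (p + r))
              have h3 : p + (r + 1) = (p + r).succ := rfl
              rw [h3]; omega
          exact (h2 _ _).trans (hk.monotone h1)
        split_ifs with hil
        · subst hil
          have : |∫ y, g ((⇑S.symm)^[q i] y) * g ((⇑S.symm)^[q i] y) ∂ν| ≤ 1 := by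
            have := norm_integral_le_of_norm_le_const (μ := ν) (C := 1)
              (f := fun y => g ((⇑S.symm)^[q i] y) * g ((⇑S.symm)^[q i] y))
              (Eventually.of_forall fun y => by
                have h0 : 0 ≤ c := measureReal_nonneg
                have h1 : c ≤ 1 := measureReal_le_one
                have : |g ((⇑S.symm)^[q i] y)| ≤ 1 := by
                  simp only [hgdef, Set.indicator]
                  rw [abs_le]
                  split_ifs <;> constructor <;> linarith
                rw [norm_mul, Real.norm_eq_abs]
                exact mul_le_one₀ this (abs_nonneg _) this)
            simpa using this
          simpa using mul_le_mul hΘK this (abs_nonneg _) hK0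
        · refine mul_le_mul hΘK ?_ (abs_nonneg _) hK0
          rcases lt_or_gt_of_ne hil with h | h
          · exact hM _ _ (hmono _ _ h)
          · have := hM _ _ (hmono _ _ h)
            simp_rw [mul_comm (g ((⇑S.symm)^[q i] _))]
            exact this
      have hfin : ∑ i : Fin N, ∑ l : Fin N, (if i = l then K else K * ε)
          ≤ N * K + N * N * (K * ε) := by
        have : ∀ i l : Fin N, (if i = l then K else K * ε) ≤ (if i = l then K else 0) + K * ε := by
          intro i l
          split_ifs
          · have := mul_nonneg hK0 hε.le; linarith
          · linarith
        refine (Finset.sum_le_sum fun i _ => Finset.sum_le_sum fun l _ => this i l).trans ?_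
        simp [Finset.sum_add_distrib, mul_assoc]
      have htot := hG.trans ((Finset.sum_le_sum fun i _ => Finset.sum_le_sum fun l _ =>
        hterm i l).trans hfin)
      have hcs2 := hcs.trans (mul_le_mul_of_nonneg_left htot hF0)
      rw [hsum, mul_pow]
      have hN' : (0:ℝ) < N := by exact_mod_cast hN
      have := mul_le_mul_of_nonneg_left hcs2 (sq_nonneg ((N:ℝ)⁻¹))
      refine this.trans (le_of_eq ?_)
      change ((N:ℝ)⁻¹) ^ 2 * (F * (N * K + N * N * (K * ε))) = _
      clear_value F
      field_simp
    have hle : L ^ 2 ≤ 0 := by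
      have ht : Tendsto (fun n : ℕ => F * (K * (1 / ((n:ℝ) + 1)))) atTop (𝓝 (F * (K * 0))) :=
        (tendsto_one_div_add_atTop_nhds_zero_nat.const_mul K).const_mul F
      rw [mul_zero, mul_zero] at ht
      exact ge_of_tendsto ht (Eventually.of_forall fun n => main _ (by positivity))
    exact pow_eq_zero_iff (two_ne_zero) |>.1 (le_antisymm hle (sq_nonneg _))

end Core3

section Oper

variable {X Y : Type*} [MeasurableSpace X] [MeasurableSpace Y]

lemma inner_eq_int {Z : Type*} [MeasurableSpace Z] {μ : Measure Z} (f g : Lp ℝ 2 μ) :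
    @inner ℝ _ _ f g = ∫ x, f x * g x ∂μ := by
  rw [L2.inner_def]
  simp [mul_comm]

/-- A projection of a bounded function on the product to the first coordinate. -/
lemma exists_proj {μ : Measure X} {P : Measure (X × Y)} [IsFiniteMeasure P]
    (hfst : MeasurePreserving Prod.fst P μ) {Ψ : X × Y → ℝ} (hΨ : Bd Ψ) :
    ∃ h : Lp ℝ 2 μ, ∀ F : X → ℝ, MemLp F 2 μ → ∫ z, F z.1 * Ψ z ∂P = ∫ x, F x * h x ∂μ := by
  set J := (Lp.compMeasurePreservingₗᵢ (E := ℝ) (p := 2) ℝ Prod.fst hfst).toContinuousLinearMap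
  set ψ := (hΨ.memLp P 2).toLp Ψ
  refine ⟨J.adjoint ψ, fun F hF => ?_⟩
  have h1 := ContinuousLinearMap.adjoint_inner_right J (hF.toLp F) ψ
  rw [inner_eq_int, inner_eq_int] at h1
  have e1 : ∫ x, F x * (J.adjoint ψ) x ∂μ = ∫ x, (hF.toLp F) x * (J.adjoint ψ) x ∂μ := by
    refine integral_congr_ae ?_
    filter_upwards [hF.coeFn_toLp] with x hx
    rw [hx]
  have e2 : ∫ z, F z.1 * Ψ z ∂P = ∫ z, (J (hF.toLp F)) z * ψ z ∂P := by
    refine integral_congr_ae ?_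
    have e3 : J (hF.toLp F) =ᵐ[P] (hF.toLp F) ∘ Prod.fst :=
      Lp.coeFn_compMeasurePreserving _ hfst
    have e4 := hfst.quasiMeasurePreserving.ae_eq_comp hF.coeFn_toLp
    filter_upwards [e3, e4, (hΨ.memLp P 2).coeFn_toLp] with z h3 h4 h5
    rw [h3, h4, h5]; rfl
  rw [e1, e2, h1]

variable {μ : Measure X} [IsProbabilityMeasure μ]

open Classical in
/-- The function `V f`, for `f` a genuine function. -/
noncomputable def VV (V : Lp ℝ 2 μ →L[ℝ] Lp ℝ 2 μ) (f : X → ℝ) : X → ℝ :=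
  if h : MemLp f 2 μ then V (h.toLp f) else 0

/-- The clamped version of `VV`. -/
noncomputable def WW (V : Lp ℝ 2 μ →L[ℝ] Lp ℝ 2 μ) (f : X → ℝ) : X → ℝ :=
  fun x => max (-(⨆ y, |f y|)) (min (⨆ y, |f y|) (VV V f x))

variable {V : Lp ℝ 2 μ →L[ℝ] Lp ℝ 2 μ}

lemma VV_eq {f : X → ℝ} (h : MemLp f 2 μ) : VV V f = V (h.toLp f) := by
  simp [VV, h]

lemma VV_meas {f : X → ℝ} (h : Bd f) : Measurable (VV V f) := by
  rw [VV_eq (h.memLp μ 2)]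
  exact (Lp.stronglyMeasurable _).measurable

lemma VV_memLp {f : X → ℝ} (h : Bd f) : MemLp (VV V f) 2 μ := by
  rw [VV_eq (h.memLp μ 2)]
  exact Lp.memLp _

lemma VV_int {f : X → ℝ} (h : Bd f) : Integrable (VV V f) μ :=
  (VV_memLp h).integrable (by norm_num)

variable {T : X ≃ᵐ X} {k : ℕ → ℕ}

lemma VV_tendsto (hT : MeasurePreserving T μ μ)
    (hV : ∀ f g : Lp ℝ 2 μ,
      Tendsto (fun j => ∫ x, f ((⇑T)^[k j] x) * g x ∂μ) atTop (𝓝 (@inner ℝ _ _ (V f) g)))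
    {f : X → ℝ} (hf : Bd f) (g : Lp ℝ 2 μ) :
    Tendsto (fun j => ∫ x, f ((⇑T)^[k j] x) * g x ∂μ) atTop (𝓝 (∫ x, VV V f x * g x ∂μ)) := by
  have := hV ((hf.memLp μ 2).toLp f) g
  rw [inner_eq_int, ← VV_eq] at this
  refine this.congr fun j => ?_
  refine integral_congr_ae ?_
  filter_upwards [(hT.iterate (k j)).quasiMeasurePreserving.ae_eq_comp
    (hf.memLp μ 2).coeFn_toLp] with x hx
  simp only [Function.comp_apply] at hx
  rw [hx]

lemma VV_tendsto' (hT : MeasurePreserving T μ μ)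
    (hV : ∀ f g : Lp ℝ 2 μ,
      Tendsto (fun j => ∫ x, f ((⇑T)^[k j] x) * g x ∂μ) atTop (𝓝 (@inner ℝ _ _ (V f) g)))
    {f : X → ℝ} (hf : Bd f) {g : X → ℝ} (hg : Bd g) :
    Tendsto (fun j => ∫ x, f ((⇑T)^[k j] x) * g x ∂μ) atTop (𝓝 (∫ x, VV V f x * g x ∂μ)) := by
  have := VV_tendsto hT hV hf ((hg.memLp μ 2).toLp g)
  have e := (hg.memLp μ 2).coeFn_toLp
  have e1 : ∀ u : X → ℝ, ∫ x, u x * ((hg.memLp μ 2).toLp g) x ∂μ = ∫ x, u x * g x ∂μ := by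
    intro u
    refine integral_congr_ae ?_
    filter_upwards [e] with x hx
    rw [hx]
  rw [e1] at this
  exact this.congr fun j => e1 _

lemma setInt_eq {s : Set X} (hs : MeasurableSet s) (u : X → ℝ) :
    ∫ x in s, u x ∂μ = ∫ x, u x * s.indicator (fun _ => (1:ℝ)) x ∂μ := by
  rw [← integral_indicator hs]
  congr 1; ext x
  by_cases h : x ∈ s <;> simp [h]

lemma VV_le (hT : MeasurePreserving T μ μ)
    (hV : ∀ f g : Lp ℝ 2 μ,
      Tendsto (fun j => ∫ x, f ((⇑T)^[k j] x) * g x ∂μ) atTop (𝓝 (@inner ℝ _ _ (V f) g)))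
    {f : X → ℝ} (hf : Bd f) {D : ℝ} (hD : ∀ x, |f x| ≤ D) : ∀ᵐ x ∂μ, |VV V f x| ≤ D := by
  have h1 : VV V f ≤ᵐ[μ] fun _ => D := by
    refine ae_le_of_forall_setIntegral_le (VV_int hf) (integrable_const _) fun s hs _ => ?_
    rw [setInt_eq hs, setInt_eq hs]
    refine le_of_tendsto (VV_tendsto' hT hV hf (Bd.indicator hs)) (Eventually.of_forall fun j => ?_)
    refine integral_mono
      (((hf.comp (T.measurable.iterate (k j))).mul (Bd.indicator hs)).integrable μ)
      (((Bd.const D).mul (Bd.indicator hs)).integrable μ) fun x => ?_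
    exact mul_le_mul_of_nonneg_right ((abs_le.1 (hD _)).2)
      (Set.indicator_nonneg (fun _ _ => zero_le_one) _)
  have h2 : (fun _ => -D) ≤ᵐ[μ] VV V f := by
    refine ae_le_of_forall_setIntegral_le (integrable_const _) (VV_int hf) fun s hs _ => ?_
    rw [setInt_eq hs, setInt_eq hs]
    refine ge_of_tendsto (VV_tendsto' hT hV hf (Bd.indicator hs)) (Eventually.of_forall fun j => ?_)
    refine integral_mono
      (((Bd.const (-D)).mul (Bd.indicator hs)).integrable μ)
      (((hf.comp (T.measurable.iterate (k j))).mul (Bd.indicator hs)).integrable μ) fun x => ?_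
    exact mul_le_mul_of_nonneg_right ((abs_le.1 (hD _)).1)
      (Set.indicator_nonneg (fun _ _ => zero_le_one) _)
  filter_upwards [h1, h2] with x h h'
  exact abs_le.2 ⟨h', h⟩

lemma VV_comp (hT : MeasurePreserving T μ μ)
    (hV : ∀ f g : Lp ℝ 2 μ,
      Tendsto (fun j => ∫ x, f ((⇑T)^[k j] x) * g x ∂μ) atTop (𝓝 (@inner ℝ _ _ (V f) g)))
    {f : X → ℝ} (hf : Bd f) : VV V (fun x => f (T x)) =ᵐ[μ] fun x => VV V f (T x) := by
  have hfT := hf.comp T.measurable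
  refine Integrable.ae_eq_of_forall_setIntegral_eq _ _ (VV_int hfT)
    (hT.integrable_comp_of_integrable (VV_int hf)) fun s hs _ => ?_
  rw [setInt_eq hs, setInt_eq hs]
  set g := s.indicator (fun _ => (1:ℝ))
  have hg : Bd g := Bd.indicator hs
  have hg' := hg.comp T.symm.measurable
  refine tendsto_nhds_unique (VV_tendsto' hT hV hfT hg) ?_
  have h2 := VV_tendsto' hT hV hf hg'
  rw [← mp_integral hT (F := fun x => VV V f x * g (T.symm x)) ((VV_meas hf).mul hg'.1)] at h2
  simp only [T.symm_apply_apply] at h2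
  refine h2.congr fun j => ?_
  rw [← mp_integral hT ((hf.comp (T.measurable.iterate (k j))).mul hg').1]
  simp only [T.symm_apply_apply, ← Function.iterate_succ_apply]
  simp only [Function.iterate_succ_apply']

lemma VV_comp_symm (hT : MeasurePreserving T μ μ)
    (hV : ∀ f g : Lp ℝ 2 μ,
      Tendsto (fun j => ∫ x, f ((⇑T)^[k j] x) * g x ∂μ) atTop (𝓝 (@inner ℝ _ _ (V f) g)))
    {f : X → ℝ} (hf : Bd f) :
    VV V (fun x => f (T.symm x)) =ᵐ[μ] fun x => VV V f (T.symm x) := by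
  have h := VV_comp hT hV (hf.comp T.symm.measurable)
  simp only [T.symm_apply_apply] at h
  have h2 := (hT.symm T).quasiMeasurePreserving.ae_eq_comp h
  filter_upwards [h2] with x hx
  simp only [Function.comp_apply, T.apply_symm_apply] at hx
  exact hx.symm

lemma bd_sup {f : X → ℝ} (hf : Bd f) (x : X) : |f x| ≤ ⨆ y, |f y| := by
  obtain ⟨-, C, hC⟩ := hf
  exact le_ciSup (f := fun y => |f y|) ⟨C, by rintro _ ⟨y, rfl⟩; exact hC y⟩ x

lemma WW_abs {f : X → ℝ} (hf : Bd f) (x : X) : |WW V f x| ≤ ⨆ y, |f y| := by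
  have h0 : 0 ≤ ⨆ y, |f y| := (abs_nonneg _).trans (bd_sup hf x)
  rw [abs_le]
  refine ⟨le_max_left _ _, max_le (by linarith) (min_le_left _ _)⟩

lemma WW_bd {f : X → ℝ} (hf : Bd f) : Bd (WW V f) :=
  ⟨measurable_const.max (measurable_const.min (VV_meas hf)), _, WW_abs hf⟩

lemma WW_le {f : X → ℝ} {C : ℝ} (hf : Bd f) (hC : ∀ x, |f x| ≤ C) (x : X) : |WW V f x| ≤ C := by
  haveI : Nonempty X := ⟨x⟩
  exact (WW_abs hf x).trans (ciSup_le hC)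

lemma WW_ae (hT : MeasurePreserving T μ μ)
    (hV : ∀ f g : Lp ℝ 2 μ,
      Tendsto (fun j => ∫ x, f ((⇑T)^[k j] x) * g x ∂μ) atTop (𝓝 (@inner ℝ _ _ (V f) g)))
    {f : X → ℝ} (hf : Bd f) : WW V f =ᵐ[μ] VV V f := by
  filter_upwards [VV_le hT hV hf (bd_sup hf)] with x hx
  rw [abs_le] at hx
  simp [WW, hx.1, hx.2]

lemma WW_comp (hT : MeasurePreserving T μ μ)
    (hV : ∀ f g : Lp ℝ 2 μ,
      Tendsto (fun j => ∫ x, f ((⇑T)^[k j] x) * g x ∂μ) atTop (𝓝 (@inner ℝ _ _ (V f) g)))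
    {f : X → ℝ} (hf : Bd f) :
    WW V (fun x => f (T.symm x)) =ᵐ[μ] fun x => WW V f (T.symm x) := by
  have h1 := WW_ae hT hV (hf.comp T.symm.measurable)
  have h2 := (hT.symm T).quasiMeasurePreserving.ae_eq_comp (WW_ae hT hV hf)
  exact h1.trans ((VV_comp_symm hT hV hf).trans h2.symm)

lemma WW_conv {P : Measure (X × Y)} [IsProbabilityMeasure P]
    (hfst : MeasurePreserving Prod.fst P μ) (hT : MeasurePreserving T μ μ)
    (hV : ∀ f g : Lp ℝ 2 μ,
      Tendsto (fun j => ∫ x, f ((⇑T)^[k j] x) * g x ∂μ) atTop (𝓝 (@inner ℝ _ _ (V f) g))) :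
    Conv P (fun j => (⇑T)^[k j]) (WW V) := by
  intro f Ψ hf hΨ
  obtain ⟨h, hh⟩ := exists_proj hfst hΨ
  rw [hh _ ((WW_bd hf).memLp μ 2)]
  have e : ∫ x, WW V f x * h x ∂μ = ∫ x, VV V f x * h x ∂μ := by
    refine integral_congr_ae ?_
    filter_upwards [WW_ae hT hV hf] with x hx
    rw [hx]
  rw [e]
  refine (VV_tendsto hT hV hf h).congr fun j => ?_
  exact (hh _ ((hf.comp (T.measurable.iterate (k j))).memLp μ 2)).symm

end Oper

section Equivariance

open scoped ENNReal

variable {X : Type*} {A : MeasurableSpace X} [mX : MeasurableSpace X] {μ : Measure X}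

lemma inv_sets [IsProbabilityMeasure μ] {V : Lp ℝ 2 μ →L[ℝ] Lp ℝ 2 μ} {τ : X → X}
    (hτ : Measurable τ)
    (h : ∀ f, Bd f → VV V (fun x => f (τ x)) =ᵐ[μ] fun x => VV V f (τ x)) :
    ∀ s, MeasurableSet[generatedFactor μ V] s →
      ∃ t, MeasurableSet[generatedFactor μ V] t ∧ τ ⁻¹' s =ᵐ[μ] t := by
  have : generatedFactor μ V ≤
      (eventuallyMeasurableSpace (generatedFactor μ V) (ae μ)).map τ := by
    refine MeasurableSpace.generateFrom_le ?_
    rintro s ⟨f, ⟨f₀, hm, hb, hae⟩, B, hB, rfl⟩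
    have hf : Bd f₀ := ⟨hm, hb⟩
    have hfτ := hf.comp hτ
    have e : f = (hf.memLp μ 2).toLp f₀ := Lp.ext (hae.trans (MemLp.coeFn_toLp _).symm)
    refine ⟨VV V (fun x => f₀ (τ x)) ⁻¹' B, ?_, ?_⟩
    · refine MeasurableSpace.measurableSet_generateFrom ?_
      exact ⟨(hfτ.memLp μ 2).toLp _, ⟨_, hfτ.1, hfτ.2, MemLp.coeFn_toLp _⟩, B, hB, by
        rw [VV_eq (hfτ.memLp μ 2)]⟩
    · filter_upwards [h f₀ hf] with x hx
      rw [e, ← VV_eq (hf.memLp μ 2)]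
      change (VV V f₀ (τ x) ∈ B) = (VV V (fun x => f₀ (τ x)) x ∈ B)
      rw [hx]
  exact this

lemma inv_funs {τ : X → X}
    (h : ∀ s, MeasurableSet[A] s → ∃ t, MeasurableSet[A] t ∧ τ ⁻¹' s =ᵐ[μ] t)
    {φ : X → ℝ≥0∞} (hφ : Measurable[A] φ) :
    ∃ φ' : X → ℝ≥0∞, Measurable[A] φ' ∧ (fun x => φ (τ x)) =ᵐ[μ] φ' := by
  refine @Measurable.ennreal_induction X A
    (fun φ => ∃ φ' : X → ℝ≥0∞, Measurable[A] φ' ∧ (fun x => φ (τ x)) =ᵐ[μ] φ') ?_ ?_ ?_ φ hφ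
  · intro c s hs
    obtain ⟨t, ht, hst⟩ := h s hs
    refine ⟨t.indicator fun _ => c, measurable_const.indicator ht, ?_⟩
    filter_upwards [hst] with x hx
    have hx' : (τ x ∈ s) = (x ∈ t) := hx
    by_cases hxt : x ∈ t
    · rw [Set.indicator_of_mem hxt, Set.indicator_of_mem (hx' ▸ hxt)]
    · rw [Set.indicator_of_notMem hxt, Set.indicator_of_notMem (hx' ▸ hxt)]
  · rintro f g - - - ⟨f', hf', hf⟩ ⟨g', hg', hg⟩
    refine ⟨f' + g', hf'.add hg', ?_⟩
    filter_upwards [hf, hg] with x h1 h2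
    simp [h1, h2]
  · intro f _ _ hf
    choose f' hf' hae using hf
    refine ⟨fun x => ⨆ n, f' n x, Measurable.iSup hf', ?_⟩
    filter_upwards [ae_all_iff.2 hae] with x hx
    simp [hx]

lemma kern_equiv [IsProbabilityMeasure μ] (hA : A ≤ mX) {T : X ≃ᵐ X}
    (hT : MeasurePreserving T μ μ)
    (h : ∀ s, MeasurableSet[A] s → ∃ t, MeasurableSet[A] t ∧ T ⁻¹' s =ᵐ[μ] t)
    (h' : ∀ s, MeasurableSet[A] s → ∃ t, MeasurableSet[A] t ∧ T.symm ⁻¹' s =ᵐ[μ] t)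
    {c : Set X → X → ℝ≥0∞} (hc : ∀ B, MeasurableSet B → Measurable[A] (c B))
    (hcs : ∀ B, MeasurableSet B → ∀ s, MeasurableSet[A] s → ∫⁻ x in s, c B x ∂μ = μ (s ∩ B))
    {B : Set X} (hB : MeasurableSet B) :
    ∃ φ' : X → ℝ≥0∞, Measurable[A] φ' ∧ (fun x => c B (T x)) =ᵐ[μ] φ' ∧
      φ' =ᵐ[μ.trim hA] c (T ⁻¹' B) := by
  obtain ⟨φ', hφ', hae⟩ := inv_funs h (hc B hB)
  refine ⟨φ', hφ', hae, ?_⟩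
  have hTB : MeasurableSet (T ⁻¹' B) := T.measurable hB
  refine @ae_eq_of_forall_setLIntegral_eq_of_sigmaFinite X A (μ.trim hA) _ _ _ hφ' (hc _ hTB)
    fun s hs _ => ?_
  rw [setLIntegral_trim hA hφ' hs, setLIntegral_trim hA (hc _ hTB) hs, hcs _ hTB _ hs]
  obtain ⟨t, ht, hst⟩ := h' s hs
  have e1 : ∫⁻ x in s, φ' x ∂μ = ∫⁻ x in s, c B (T x) ∂μ :=
    lintegral_congr_ae (ae_restrict_of_ae hae.symm)
  have e2 : s = T ⁻¹' (T.symm ⁻¹' s) := by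
    ext x; simp
  have e3 : ∫⁻ x in s, c B (T x) ∂μ = ∫⁻ x in T.symm ⁻¹' s, c B x ∂μ := by
    conv_lhs => rw [e2]
    exact hT.setLIntegral_comp_preimage (T.symm.measurable (hA s hs)) ((hc B hB).mono hA le_rfl)
  rw [e1, e3, setLIntegral_congr hst, hcs B hB t ht]
  have e4 : s ∩ T ⁻¹' B = T ⁻¹' (T.symm ⁻¹' s ∩ B) := by
    rw [Set.preimage_inter, ← e2]
  rw [e4, hT.measure_preimage ((T.symm.measurable (hA s hs)).inter hB).nullMeasurableSet]
  exact measure_congr (hst.symm.inter (EventuallyEq.refl _ _))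

end Equivariance

section Extension

open scoped ENNReal ProbabilityTheory
open ProbabilityTheory

lemma ext_exists {X₁ X Y : Type*} [MeasurableSpace X₁] [MeasurableSpace X] [MeasurableSpace Y]
    (κ : Kernel X₁ X) [IsMarkovKernel κ] (ρ : Measure (X₁ × Y)) [IsProbabilityMeasure ρ]
    (μ : Measure X) (π : X → X₁) (hπ : Measurable π)
    (hκ : ∀ s B, MeasurableSet s → MeasurableSet B →
      ∫⁻ x in s, κ x B ∂(ρ.map Prod.fst) = μ (π ⁻¹' s ∩ B)) :
    ∃ P : Measure (X × Y), IsProbabilityMeasure P ∧ P.map Prod.fst = μ ∧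
      P.map (Prod.map π id) = ρ ∧
      ∀ B C, MeasurableSet B → MeasurableSet C →
        P (B ×ˢ C) = ∫⁻ z, κ z.1 B * C.indicator 1 z.2 ∂ρ := by
  set K : Kernel (X₁ × Y) (X × Y) :=
    (κ.comap Prod.fst measurable_fst) ×ₖ (Kernel.deterministic Prod.snd measurable_snd) with hK
  have hrect : ∀ B C, MeasurableSet B → MeasurableSet C →
        (ρ.bind K) (B ×ˢ C) = ∫⁻ z, κ z.1 B * C.indicator 1 z.2 ∂ρ := by
    intro B C hB hC
    rw [Measure.bind_apply (hB.prod hC) K.aemeasurable]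
    congr 1; ext z
    rw [hK, Kernel.prod_apply_prod, Kernel.comap_apply, Kernel.deterministic_apply' _ _ hC]
    rfl
  have hP : IsProbabilityMeasure (ρ.bind K) := inferInstance
  have hind : ∀ s, MeasurableSet s → ∀ᵐ x ∂(ρ.map Prod.fst), κ x (π ⁻¹' s) = s.indicator 1 x := by
    intro s hs
    haveI : IsProbabilityMeasure (ρ.map Prod.fst) :=
      Measure.isProbabilityMeasure_map measurable_fst.aemeasurable
    refine ae_eq_of_forall_setLIntegral_eq_of_sigmaFinite (κ.measurable_coe (hπ hs))
      (measurable_one.indicator hs) fun u hu _ => ?_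
    have huv := hκ (u ∩ s) Set.univ (hu.inter hs) MeasurableSet.univ
    simp only [measure_univ, setLIntegral_one, Set.inter_univ] at huv
    rw [hκ u _ hu (hπ hs), lintegral_indicator_one hs, Measure.restrict_apply hs, Set.inter_comm s u,
      huv, Set.preimage_inter]
  refine ⟨ρ.bind K, hP, ?_, ?_, hrect⟩
  · ext B hB
    rw [Measure.map_apply measurable_fst hB]
    have : Prod.fst ⁻¹' B = B ×ˢ (Set.univ : Set Y) := by ext; simp
    rw [this, hrect _ _ hB MeasurableSet.univ]
    have h2 := hκ Set.univ B MeasurableSet.univ hB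
    rw [Measure.restrict_univ, lintegral_map (κ.measurable_coe hB) measurable_fst] at h2
    simpa using h2
  · haveI : IsProbabilityMeasure ((ρ.bind K).map (Prod.map π (id : Y → Y))) :=
      Measure.isProbabilityMeasure_map (hπ.prodMap measurable_id).aemeasurable
    refine Measure.ext_prod fun {s C} hs hC => ?_
    rw [Measure.map_apply (hπ.prodMap measurable_id) (hs.prod hC)]
    have : Prod.map π (id : Y → Y) ⁻¹' (s ×ˢ C) = (π ⁻¹' s) ×ˢ C := rfl
    rw [this, hrect _ _ (hπ hs) hC, ← lintegral_indicator_one (hs.prod hC)]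
    refine lintegral_congr_ae ?_
    filter_upwards [ae_of_ae_map measurable_fst.aemeasurable (hind s hs)] with z hz
    rw [hz]
    by_cases h1 : z.1 ∈ s <;> by_cases h2 : z.2 ∈ C <;> simp [h1, h2]

end Extension

section ExistsP

open scoped ENNReal ProbabilityTheory
open ProbabilityTheory

variable {X Y : Type*} {A : MeasurableSpace X} [mX : MeasurableSpace X] [mY : MeasurableSpace Y]

lemma exists_P [StandardBorelSpace X] {μ : Measure X} [IsProbabilityMeasure μ] (hA : A ≤ mX)
    {T : X ≃ᵐ X} (hT : MeasurePreserving T μ μ)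
    (h : ∀ s, MeasurableSet[A] s → ∃ t, MeasurableSet[A] t ∧ T ⁻¹' s =ᵐ[μ] t)
    (h' : ∀ s, MeasurableSet[A] s → ∃ t, MeasurableSet[A] t ∧ T.symm ⁻¹' s =ᵐ[μ] t)
    {S : Y ≃ᵐ Y} (ρ : @Measure (X × Y) (A.prod mY)) (hρ : @IsProbabilityMeasure _ (A.prod mY) ρ)
    (hinv : @Measure.map _ _ (A.prod mY) (A.prod mY) (Prod.map ⇑T ⇑S) ρ = ρ)
    (hfst : @Measure.map _ _ (A.prod mY) A Prod.fst ρ = μ.trim hA) :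
    ∃ P : Measure (X × Y), IsProbabilityMeasure P ∧ MeasurePreserving Prod.fst P μ ∧
      MeasurePreserving (Prod.map T S) P P ∧
      ∃ hm : A.prod mY ≤ mX.prod mY, P.trim hm = ρ := by
  have hm : A.prod mY ≤ mX.prod mY :=
    sup_le_sup (MeasurableSpace.comap_mono hA) le_rfl
  have hcs : ∀ s B, MeasurableSet[A] s → MeasurableSet B →
      ∫⁻ x in s, condExpKernel μ A x B ∂(μ.trim hA) = μ (s ∩ B) := by
    intro s B hs hB
    have e := compProd_trim_condExpKernel (μ := μ) hA
    have e2 := congrArg (fun m => @DFunLike.coe _ _ _ _ m (s ×ˢ B)) e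
    beta_reduce at e2
    rw [Measure.compProd_apply_prod hs hB] at e2
    rw [e2]
    rw [@Measure.map_apply _ _ mX (A.prod mX) _ _ ?_ _ ?_]
    · rfl
    · exact Measurable.prodMk (measurable_id'' hA) measurable_id
    · exact @MeasurableSet.prod _ _ A mX _ _ hs hB
  obtain ⟨P, hP, hPf, hPρ, hrect⟩ := @ext_exists X X Y A mX mY (condExpKernel μ A) _ ρ hρ μ id
    (measurable_id'' hA) (by
      intro s B hs hB
      rw [hfst]
      exact hcs s B hs hB)
  have htrim : P.trim hm = ρ := by
    rw [trim_eq_map hm]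
    exact hPρ
  refine ⟨P, hP, ⟨measurable_fst, hPf⟩, ?_, hm, htrim⟩
  -- invariance of integrals of functions measurable with respect to the small σ-algebra
  have hlin : ∀ F : X × Y → ℝ≥0∞, Measurable[A.prod mY] F →
      ∫⁻ z, F z ∂P = @lintegral _ (A.prod mY) ρ F := by
    intro F hF
    rw [← htrim, lintegral_trim hm hF]
  have hae : @AEMeasurable _ _ (A.prod mY) (A.prod mY) (Prod.map ⇑T ⇑S) ρ := by
    by_contra hcon
    rw [@Measure.map_of_not_aemeasurable _ _ (A.prod mY) (A.prod mY) _ _ hcon] at hinv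
    have := hρ.measure_univ
    rw [← hinv] at this
    simp at this
  have hinvF : ∀ F : X × Y → ℝ≥0∞, Measurable[A.prod mY] F →
      ∫⁻ z, F (Prod.map T S z) ∂P = ∫⁻ z, F z ∂P := by
    intro F hF
    obtain ⟨Θ, hΘ, hΘae⟩ := hae
    have h1 : ∀ᵐ z ∂P, Prod.map T S z = Θ z := by
      rw [← htrim] at hΘae
      exact ae_eq_of_ae_eq_trim hΘae
    have h2 : ∫⁻ z, F (Prod.map T S z) ∂P = ∫⁻ z, F (Θ z) ∂P := by
      refine lintegral_congr_ae ?_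
      filter_upwards [h1] with z hz
      rw [hz]
    rw [h2, hlin (fun z => F (Θ z)) (hF.comp hΘ), hlin _ hF]
    have h3 : @Measure.map _ _ (A.prod mY) (A.prod mY) Θ ρ = ρ := by
      rw [← @Measure.map_congr _ _ (A.prod mY) (A.prod mY) _ _ _ hΘae, hinv]
    conv_rhs => rw [← h3]
    exact (@lintegral_map _ _ (A.prod mY) (A.prod mY) _ _ _ hF hΘ).symm
  have hTS : Measurable (Prod.map T S) := T.measurable.prodMap S.measurable
  refine ⟨hTS, ?_⟩
  haveI : IsProbabilityMeasure (P.map (Prod.map T S)) :=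
    Measure.isProbabilityMeasure_map hTS.aemeasurable
  refine Measure.ext_prod fun {B C} hB hC => ?_
  rw [Measure.map_apply hTS (hB.prod hC)]
  have hpre : Prod.map T S ⁻¹' (B ×ˢ C) = (T ⁻¹' B) ×ˢ (S ⁻¹' C) := rfl
  have hcm : ∀ B, MeasurableSet B → Measurable[A] fun x => condExpKernel μ A x B :=
    fun B hB => measurable_condExpKernel hB
  obtain ⟨φ, hφ, hφ1, hφ2⟩ := kern_equiv hA hT h h' (c := fun B x => condExpKernel μ A x B) hcm
    (fun B hB s hs => by
      rw [← setLIntegral_trim hA (hcm B hB) hs]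
      exact hcs s B hs hB) hB
  have mfst : @Measurable _ _ (A.prod mY) A (Prod.fst : X × Y → X) := @measurable_fst _ _ A mY
  have msnd : @Measurable _ _ (A.prod mY) mY (Prod.snd : X × Y → Y) := @measurable_snd _ _ A mY
  have mC : ∀ C : Set Y, MeasurableSet C →
      Measurable[A.prod mY] fun z : X × Y => C.indicator (1 : Y → ℝ≥0∞) z.2 :=
    fun C hC => (measurable_one.indicator hC).comp msnd
  have hFm : ∀ B C, MeasurableSet B → MeasurableSet C → Measurable[A.prod mY]
      fun z : X × Y => condExpKernel μ A z.1 B * C.indicator (1 : Y → ℝ≥0∞) z.2 :=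
    fun B C hB hC => ((hcm B hB).comp mfst).mul (mC C hC)
  have hSC : MeasurableSet (S ⁻¹' C) := S.measurable hC
  have hTB : MeasurableSet (T ⁻¹' B) := T.measurable hB
  rw [hpre, hrect _ _ hTB hSC, hrect _ _ hB hC, ← hlin _ (hFm _ _ hTB hSC), ← hlin _ (hFm _ _ hB hC),
    ← hinvF _ (hFm _ _ hB hC)]
  refine lintegral_congr_ae ?_
  have hqf : MeasurePreserving Prod.fst P μ := ⟨measurable_fst, hPf⟩
  have k1 := hqf.quasiMeasurePreserving.ae_eq_comp hφ1
  have k2 := hqf.quasiMeasurePreserving.ae_eq_comp (ae_eq_of_ae_eq_trim hφ2)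
  filter_upwards [k1, k2] with z h1 h2
  simp only [Function.comp_apply] at h1 h2
  simp only [Prod.map_fst, Prod.map_snd]
  rw [h1, h2]
  rfl

end ExistsP

section Finish

open Complex in
lemma exp_of_moments {X : Type*} [MeasurableSpace X] {m₁ m₂ : Measure X} [IsFiniteMeasure m₁]
    [IsFiniteMeasure m₂] {w : X → ℝ} (hw : Bd w)
    (h : ∀ n : ℕ, ∫ x, w x ^ n ∂m₁ = ∫ x, w x ^ n ∂m₂) :
    ∫ x, cexp (w x * I) ∂m₁ = ∫ x, cexp (w x * I) ∂m₂ := by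
  obtain ⟨C, hC⟩ := hw.2
  have key : ∀ (m : Measure X) [IsFiniteMeasure m],
      HasSum (fun n : ℕ => (I ^ n / (n.factorial : ℂ)) * ((∫ x, w x ^ n ∂m : ℝ) : ℂ))
        (∫ x, cexp (w x * I) ∂m) := by
    intro m _
    have := hasSum_integral_of_dominated_convergence (μ := m)
      (F := fun (n : ℕ) (x : X) => ((w x : ℂ) * I) ^ n / (n.factorial : ℂ))
      (f := fun x => cexp (w x * I)) (fun n _ => |C| ^ n / n.factorial) ?_ ?_ ?_ ?_ ?_
    · have e : (fun n : ℕ => (I ^ n / (n.factorial : ℂ)) * ((∫ x, w x ^ n ∂m : ℝ) : ℂ))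
          = fun n : ℕ => ∫ a, ((w a : ℂ) * I) ^ n / (n.factorial : ℂ) ∂m := by
        funext n
        rw [← integral_complex_ofReal, ← integral_const_mul]
        congr 1; ext x
        push_cast
        rw [mul_pow]; ring
      rw [e]
      exact this
    · intro n
      have := hw.1
      exact Measurable.aestronglyMeasurable (by fun_prop)
    · intro n
      refine Eventually.of_forall fun x => ?_
      simp only [norm_div, norm_pow, norm_mul, norm_I, mul_one, norm_real, Complex.norm_natCast,
        Real.norm_eq_abs]
      exact div_le_div_of_nonneg_right (pow_le_pow_left₀ (abs_nonneg _)
        ((hC x).trans (le_abs_self C)) n) (by positivity)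
    · exact Eventually.of_forall fun x => Real.summable_pow_div_factorial _
    · exact integrable_const _
    · refine Eventually.of_forall fun x => ?_
      rw [Complex.exp_eq_exp_ℂ]
      exact NormedSpace.expSeries_div_hasSum_exp _
  refine (key m₁).unique ?_
  simp_rw [h]
  exact key m₂

variable {X Y : Type*} [MeasurableSpace X] [MeasurableSpace Y]
  {μ : Measure X} [IsProbabilityMeasure μ] {V : Lp ℝ 2 μ →L[ℝ] Lp ℝ 2 μ}

lemma VV_add {f g : X → ℝ} (hf : Bd f) (hg : Bd g) :
    VV V (fun x => f x + g x) =ᵐ[μ] fun x => VV V f x + VV V g x := by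
  have hfm := hf.memLp μ 2
  have hgm := hg.memLp μ 2
  rw [VV_eq ((hf.add hg).memLp μ 2), VV_eq hfm, VV_eq hgm]
  have : ((hf.add hg).memLp μ 2).toLp _ = hfm.toLp f + hgm.toLp g := (MemLp.toLp_add hfm hgm)
  rw [this, map_add]
  exact Lp.coeFn_add _ _

lemma VV_smul {f : X → ℝ} (hf : Bd f) (c : ℝ) :
    VV V (fun x => c * f x) =ᵐ[μ] fun x => c * VV V f x := by
  have hfm := hf.memLp μ 2
  rw [VV_eq (((Bd.const c).mul hf).memLp μ 2), VV_eq hfm]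
  have : (((Bd.const c).mul hf).memLp μ 2).toLp _ = c • hfm.toLp f := (MemLp.toLp_const_smul c hfm)
  rw [this, map_smul]
  exact Lp.coeFn_smul _ _

lemma VV_sum {ι : Type*} (s : Finset ι) (c : ι → ℝ) (f : ι → X → ℝ) (hf : ∀ i, Bd (f i)) :
    VV V (fun x => ∑ i ∈ s, c i * f i x) =ᵐ[μ] fun x => ∑ i ∈ s, c i * VV V (f i) x := by
  classical
  induction s using Finset.induction_on with
  | empty =>
    simp only [Finset.sum_empty]
    have := VV_smul (V := V) (Bd.const (α := X) 0) 0
    simpa using this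
  | insert i s hi ih =>
    simp only [Finset.sum_insert hi]
    have h1 := VV_add (V := V) ((Bd.const (c i)).mul (hf i))
      (Bd.sum s fun i => (Bd.const (c i)).mul (hf i))
    filter_upwards [h1, ih, VV_smul (V := V) (hf i) (c i)] with x h1 h2 h3
    rw [h1, h2, h3]

lemma measure_eq_on {m₁ m₂ : Measure X} [IsFiniteMeasure m₁] [IsFiniteMeasure m₂]
    (h₁ : m₁ ≪ μ) (h₂ : m₂ ≪ μ) (hWV : ∀ f, Bd f → WW V f =ᵐ[μ] VV V f)
    (h : ∀ f, Bd f → ∀ n : ℕ, ∫ x, WW V f x ^ n ∂m₁ = ∫ x, WW V f x ^ n ∂m₂)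
    {s : Set X} (hs : MeasurableSet[generatedFactor μ V] s) : m₁ s = m₂ s := by
  set G : X → ({f : X → ℝ // Bd f} → ℝ) := fun x f => VV V f.1 x with hG
  have hGm : Measurable G := measurable_pi_lambda _ fun f => VV_meas f.2
  have hle : generatedFactor μ V ≤ MeasurableSpace.pi.comap G := by
    refine MeasurableSpace.generateFrom_le ?_
    rintro s ⟨f, ⟨f₀, hm, hb, hae⟩, B, hB, rfl⟩
    have hf : Bd f₀ := ⟨hm, hb⟩
    have e : f = (hf.memLp μ 2).toLp f₀ := Lp.ext (hae.trans (MemLp.coeFn_toLp _).symm)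
    refine ⟨(fun g => g ⟨f₀, hf⟩) ⁻¹' B, measurable_pi_apply _ hB, ?_⟩
    rw [e, ← VV_eq (hf.memLp μ 2)]
    rfl
  obtain ⟨Q, hQ, rfl⟩ := hle s hs
  suffices hmap : m₁.map G = m₂.map G by
    rw [← Measure.map_apply hGm hQ, ← Measure.map_apply hGm hQ, hmap]
  refine IsProjectiveLimit.unique (P := fun J => (m₂.map G).map J.restrict) (fun J => ?_)
    (fun J => rfl)
  change (m₁.map G).map J.restrict = (m₂.map G).map J.restrict
  rw [Measure.map_map (Finset.measurable_restrict J) hGm,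
    Measure.map_map (Finset.measurable_restrict J) hGm]
  have hJm : Measurable (J.restrict ∘ G) := (Finset.measurable_restrict J).comp hGm
  refine Measure.ext_of_charFunDual (funext fun L => ?_)
  classical
  set c : J → ℝ := fun i => L (Pi.single i 1) with hc
  have hL : ∀ x, L ((J.restrict ∘ G) x) = ∑ i : J, c i * VV V i.1.1 x := by
    intro x
    have : (J.restrict ∘ G) x = ∑ i : J, VV V i.1.1 x • (Pi.single i 1 : J → ℝ) := by
      ext j
      simp [Finset.sum_apply, Pi.single_apply, hG]
    rw [this, map_sum]
    refine Finset.sum_congr rfl fun i _ => ?_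
    rw [map_smul, smul_eq_mul, mul_comm]
  set F : X → ℝ := fun x => ∑ i : J, c i * i.1.1 x
  have hF : Bd F := Bd.sum Finset.univ fun i : J => (Bd.const (c i)).mul i.1.2
  have hae : ∀ᵐ x ∂μ, L ((J.restrict ∘ G) x) = WW V F x := by
    filter_upwards [VV_sum (V := V) Finset.univ c (fun i : J => i.1.1) (fun i => i.1.2), hWV F hF]
      with x h1 h2
    rw [h2, h1, hL]
  have hint : ∀ m : Measure X, m ≪ μ → charFunDual (m.map (J.restrict ∘ G)) L
      = ∫ x, Complex.exp (WW V F x * Complex.I) ∂m := by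
    intro m hm
    rw [charFunDual_apply, integral_map hJm.aemeasurable]
    · refine integral_congr_ae ?_
      filter_upwards [hm.ae_le hae] with x hx
      rw [hx]
    · exact Measurable.aestronglyMeasurable (by fun_prop)
  rw [hint _ h₁, hint _ h₂]
  exact exp_of_moments (WW_bd hF) (h F hF)

end Finish

section Final

lemma prod_of_rect {X Y : Type*} [MeasurableSpace X] [MeasurableSpace Y] {m : Measure X}
    {ν : Measure Y} [IsProbabilityMeasure m] [IsProbabilityMeasure ν] {ρ : Measure (X × Y)}
    (h : ∀ s C, MeasurableSet s → MeasurableSet C → ρ (s ×ˢ C) = ν C * m s) :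
    ρ = m.prod ν :=
  (Measure.prod_eq fun s C hs hC => by rw [h s C hs hC, mul_comm]).symm

lemma snd_of_trim {X Y : Type*} {A mX : MeasurableSpace X} {mY : MeasurableSpace Y}
    {ν : Measure Y} {P : Measure (X × Y)} {hm : A.prod mY ≤ mX.prod mY}
    (h : @Measure.map _ _ (A.prod mY) mY Prod.snd (P.trim hm) = ν) :
    MeasurePreserving Prod.snd P ν := by
  refine ⟨measurable_snd, ?_⟩
  ext C hC
  have h1 : Measurable[A.prod mY] (Prod.snd : X × Y → Y) := @measurable_snd X Y A mY
  rw [← h, Measure.map_apply measurable_snd hC, @Measure.map_apply _ _ (A.prod mY) mY _ _ h1 _ hC,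
    trim_measurableSet_eq hm (h1 hC)]

lemma rect_eq {X Y : Type*} [mX : MeasurableSpace X] [mY : MeasurableSpace Y]
    {μ : Measure X} [IsProbabilityMeasure μ] {T : X ≃ᵐ X} (hT : MeasurePreserving T μ μ)
    {k : ℕ → ℕ} (hk : StrictMono k) {V : Lp ℝ 2 μ →L[ℝ] Lp ℝ 2 μ}
    (hV : ∀ f g : Lp ℝ 2 μ,
      Tendsto (fun j => ∫ x, f ((⇑T)^[k j] x) * g x ∂μ) atTop (𝓝 (@inner ℝ _ _ (V f) g)))
    {ν : Measure Y} [IsProbabilityMeasure ν] {S : Y ≃ᵐ Y} (hS : MeasurePreserving S ν ν)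
    (hmix : MeasureMixing (⇑S) ν) {P : Measure (X × Y)} [IsProbabilityMeasure P]
    (hfst : MeasurePreserving Prod.fst P μ) (hsnd : MeasurePreserving Prod.snd P ν)
    (hP : MeasurePreserving (Prod.map T S) P P)
    {s : Set X} (hs : MeasurableSet[generatedFactor μ V] s) {C : Set Y} (hC : MeasurableSet C) :
    P (s ×ˢ C) = ν C * μ s := by
  have hC' : MeasurableSet (Prod.snd ⁻¹' C : Set (X × Y)) := measurable_snd hC
  have hsX : MeasurableSet s := generatedFactor_le μ V s hs
  have hac : (P.restrict (Prod.snd ⁻¹' C)).map Prod.fst ≪ μ := by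
    rw [← hfst.map_eq]
    exact (Measure.absolutelyContinuous_of_le Measure.restrict_le_self).map measurable_fst
  have hac2 : ν C • μ ≪ μ := Measure.smul_absolutelyContinuous
  have hfin : IsFiniteMeasure (ν C • μ) := Measure.smul_finite μ (measure_ne_top ν C)
  have key := measure_eq_on (V := V) hac hac2 (fun f hf => WW_ae hT hV hf) ?_ hs
  · rw [Measure.map_apply measurable_fst hsX, Measure.restrict_apply (measurable_fst hsX)] at key
    rw [Set.prod_eq, key]
    rfl
  · intro f hf n
    have hc := core hfst hsnd T hT S hS hmix hP k hk (fun f hf => WW_bd hf)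
      (fun f C hf hC x => WW_le hf hC x) (WW_conv hfst hT hV)
      (fun f hf => WW_comp hT hV hf) n (List.replicate n f) (by simp)
      (fun g hg => by rw [List.eq_of_mem_replicate hg]; exact hf) C hC
    simp only [List.map_replicate, List.prod_replicate] at hc
    have hm : Measurable (fun x => WW V f x ^ n) := (WW_bd hf).1.pow_const n
    rw [integral_map measurable_fst.aemeasurable hm.aestronglyMeasurable,
      integral_smul_measure, ← integral_indicator hC', smul_eq_mul, mul_comm]
    refine Eq.trans ?_ hc
    congr 1
    ext z
    by_cases hz : z.2 ∈ C
    · have : z ∈ Prod.snd ⁻¹' C := hz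
      simp [hz, this]
    · have : z ∉ Prod.snd ⁻¹' C := hz
      simp [hz]

lemma final_aux {X Y : Type*} [mX : MeasurableSpace X] [StandardBorelSpace X]
    {mY : MeasurableSpace Y}
    {μ : Measure X} [IsProbabilityMeasure μ] {T : X ≃ᵐ X} (hT : MeasurePreserving T μ μ)
    {k : ℕ → ℕ} (hk : StrictMono k) {V : Lp ℝ 2 μ →L[ℝ] Lp ℝ 2 μ}
    (hV : ∀ f g : Lp ℝ 2 μ,
      Tendsto (fun j => ∫ x, f ((⇑T)^[k j] x) * g x ∂μ) atTop (𝓝 (@inner ℝ _ _ (V f) g)))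
    {ν : Measure Y} [hν : IsProbabilityMeasure ν] {S : Y ≃ᵐ Y} (hS : MeasurePreserving S ν ν)
    (hmix : MeasureMixing (⇑S) ν) (ρ : @Measure (X × Y) ((generatedFactor μ V).prod mY))
    (hρ : @IsProbabilityMeasure _ ((generatedFactor μ V).prod mY) ρ)
    (hinv : @Measure.map _ _ ((generatedFactor μ V).prod mY) ((generatedFactor μ V).prod mY)
          (Prod.map ⇑T ⇑S) ρ = ρ)
    (hfst : @Measure.map _ _ ((generatedFactor μ V).prod mY) (generatedFactor μ V) Prod.fst ρ
          = μ.trim (generatedFactor_le μ V))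
    (hsnd : @Measure.map _ _ ((generatedFactor μ V).prod mY) mY Prod.snd ρ = ν) :
    ρ = @Measure.prod _ _ (generatedFactor μ V) mY (μ.trim (generatedFactor_le μ V)) ν := by
  obtain ⟨P, hPp, hPf, hPi, hm, hPt⟩ := exists_P (generatedFactor_le μ V) hT
    (inv_sets T.measurable fun f hf => VV_comp hT hV hf)
    (inv_sets T.symm.measurable fun f hf => VV_comp_symm hT hV hf) ρ hρ hinv hfst
  have hPs : MeasurePreserving Prod.snd P ν := snd_of_trim (hm := hm) (by rw [hPt, hsnd])
  have hμ : @IsProbabilityMeasure X (generatedFactor μ V) (μ.trim (generatedFactor_le μ V)) :=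
    @IsProbabilityMeasure.mk X (generatedFactor μ V) _ (by
      rw [trim_measurableSet_eq _ MeasurableSet.univ, measure_univ])
  refine @prod_of_rect X Y (generatedFactor μ V) mY _ _ hμ hν ρ fun s C hs hC => ?_
  have hsC : MeasurableSet[(generatedFactor μ V).prod mY] (s ×ˢ C) :=
    @MeasurableSet.prod X Y (generatedFactor μ V) mY s C hs hC
  rw [← hPt, trim_measurableSet_eq hm hsC, trim_measurableSet_eq _ hs,
    rect_eq hT hk hV hS hmix hPf hPs hPi hs hC]

end Final

/-- If the Koopman powers `U_T^{k_j}` of an automorphism `T` of a standard Borel probability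
space converge weakly to `V`, then the factor `𝓐` generated by the image of `V` is disjoint
from every mixing automorphism: every `(T × S)`-invariant probability measure on
`(X × Y, 𝓐 ⊗ 𝓒)` with marginals `μ|𝓐` and `ν` is the product measure. -/
theorem generatedFactor_disjoint_from_mixing
    {X : Type*} [mX : MeasurableSpace X] [StandardBorelSpace X]
    (μ : Measure X) [IsProbabilityMeasure μ]
    (T : X ≃ᵐ X) (hT : MeasurePreserving T μ μ)
    (k : ℕ → ℕ) (hk : StrictMono k)
    (V : Lp ℝ 2 μ →L[ℝ] Lp ℝ 2 μ)
    (hV : ∀ f g : Lp ℝ 2 μ,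
      Tendsto (fun j => ∫ x, f ((⇑T)^[k j] x) * g x ∂μ) atTop (𝓝 (@inner ℝ _ _ (V f) g))) :
    ∀ (Y : Type*) (mY : MeasurableSpace Y) (ν : Measure Y),
      IsProbabilityMeasure ν →
      ∀ S : Y ≃ᵐ Y, MeasurePreserving S ν ν → MeasureMixing (⇑S) ν →
      ∀ ρ : @Measure (X × Y) ((generatedFactor μ V).prod mY),
        @IsProbabilityMeasure _ ((generatedFactor μ V).prod mY) ρ →
        @Measure.map _ _ ((generatedFactor μ V).prod mY) ((generatedFactor μ V).prod mY)
          (Prod.map ⇑T ⇑S) ρ = ρ →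
        @Measure.map _ _ ((generatedFactor μ V).prod mY) (generatedFactor μ V) Prod.fst ρ
          = μ.trim (generatedFactor_le μ V) →
        @Measure.map _ _ ((generatedFactor μ V).prod mY) mY Prod.snd ρ = ν →
        ρ = @Measure.prod _ _ (generatedFactor μ V) mY (μ.trim (generatedFactor_le μ V)) ν := by
  intro Y mY ν hν S hS hmix ρ hρ hinv hfst hsnd
  exact final_aux hT hk hV hS hmix ρ hρ hinv hfst hsnd
end
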